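/- arXiv:1811.00356 — 6 statements merged into one kernel-verified Lean document; each statement's English description precedes it below -/
import Mathlib

section
/- Let p be a prime, k a finite field with char(k) ≠ p, and G a finite p-group. The dimension of every irreducible representation of G on a finite-dimensional k-vector space V divides (p−1)p^j for some j ∈ ℕ, i.e. there exists j ∈ ℕ with dim_k V ∣ (p−1)·p^j. -/
/-- A representation is irreducible if the space is nonzero and the only invariant
subspaces are `⊥` and `⊤`. -/
def Representation.IsIrreducibleRep {k G V : Type*} [CommSemiring k] [Monoid G]
    [AddCommMonoid V] [Module k V] (ρ : Representation k G V) : Prop :=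
  Nontrivial V ∧ ∀ W : Submodule k V, (∀ g : G, W.map (ρ g) ≤ W) → W = ⊥ ∨ W = ⊤

/-!
Extend scalars to a field `L ⊇ k` containing all the roots of `X ^ exponent G - 1`. Since `L ⊗ V`
is over `k` a sum of copies of `V`, each of its subrepresentations has `k`-dimension divisible by
`dim V`, so `dim V ∣ [L : k] * dim W` for an irreducible `W ⊆ L ⊗ V`; and a cyclotomic `L` has
degree dividing `φ (exponent G)`.

It remains to see that `dim W ∣ |G|` when `G` is nilpotent. If `G` does not act by scalars, choose
`g` not acting by a scalar but central modulo the elements that do. Then `G` permutes the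
eigenspaces of `g`, so `W` is induced from a proper subgroup (the stabilizer of one of them), and
one inducts on `|G|`.
-/

namespace IrreducibleDimension

open Module Polynomial Representation
open scoped commutatorElement MonoidAlgebra TensorProduct

section Irreducible

variable {k G V : Type*} [Field k] [Monoid G] [AddCommGroup V] [Module k V]
  {ρ : Representation k G V}

theorem isIrreducibleRep_iff_isIrreducible : ρ.IsIrreducibleRep ↔ ρ.IsIrreducible := by
  refine ⟨fun ⟨_, hρ⟩ => ?_, fun hρ => ⟨?_, fun W hW => ?_⟩⟩
  · have : Nontrivial (Subrepresentation ρ) :=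
      ⟨⊥, ⊤, fun h => bot_ne_top (α := Submodule k V) (congrArg Subrepresentation.toSubmodule h)⟩
    exact ⟨fun W => (hρ W.toSubmodule fun g =>
      Submodule.map_le_iff_le_comap.2 (W.apply_mem_toSubmodule g)).imp
      (fun h => Subrepresentation.toSubmodule_injective h)
      (fun h => Subrepresentation.toSubmodule_injective h)⟩
  · have : Nontrivial (Submodule k V) :=
      (Subrepresentation.toSubmodule_injective (ρ := ρ)).nontrivial
    exact (Submodule.nontrivial_iff k).1 this
  · exact (eq_bot_or_eq_top
      (⟨W, fun g => Submodule.map_le_iff_le_comap.1 (hW g)⟩ : Subrepresentation ρ)).imp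
      (congrArg Subrepresentation.toSubmodule) (congrArg Subrepresentation.toSubmodule)

theorem eq_bot_or_eq_top_of_map_le [ρ.IsIrreducible] {W : Submodule k V}
    (hW : ∀ g, W.map (ρ g) ≤ W) : W = ⊥ ∨ W = ⊤ :=
  (isIrreducibleRep_iff_isIrreducible.2 ‹ρ.IsIrreducible›).2 W hW

theorem isIrreducible_toRepresentation {W : Subrepresentation ρ} (hW : W.toSubmodule ≠ ⊥)
    (h : ∀ U ≤ W.toSubmodule, (∀ g, U.map (ρ g) ≤ U) → U = ⊥ ∨ U = W.toSubmodule) :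
    W.toRepresentation.IsIrreducible := by
  refine isIrreducibleRep_iff_isIrreducible.1
    ⟨Submodule.nontrivial_iff_ne_bot.2 hW, fun U hU => ?_⟩
  have hinj := Submodule.map_injective_of_injective W.toSubmodule.injective_subtype
  have hinv (g : G) : (U.map W.toSubmodule.subtype).map (ρ g) ≤ U.map W.toSubmodule.subtype := by
    rintro _ ⟨_, ⟨u, hu, rfl⟩, rfl⟩
    exact ⟨_, hU g ⟨u, hu, rfl⟩, rfl⟩
  refine (h _ (Submodule.map_subtype_le _ _) hinv).imp (fun h => hinj ?_) (fun h => hinj ?_)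
  · rw [h, Submodule.map_bot]
  · rw [h, Submodule.map_subtype_top]

theorem exists_isIrreducible_toRepresentation [FiniteDimensional k V] [Nontrivial V]
    (ρ : Representation k G V) :
    ∃ W : Subrepresentation ρ, W.toRepresentation.IsIrreducible := by
  have : Nontrivial ρ.asModule := ‹Nontrivial V›
  have : IsArtinian k[G] ρ.asModule := isArtinian_of_tower k inferInstance
  have : IsAtomic (Subrepresentation ρ) :=
    Subrepresentation.subrepresentationSubmoduleOrderIso.isAtomic_iff.2 inferInstance
  have : Nontrivial (Subrepresentation ρ) :=
    Subrepresentation.subrepresentationSubmoduleOrderIso.toEquiv.nontrivial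
  obtain ⟨W, hW⟩ := IsAtomic.exists_atom (Subrepresentation ρ)
  refine ⟨W, isIrreducible_toRepresentation
    (fun h => hW.1 (Subrepresentation.toSubmodule_injective h)) fun U hUW hU => ?_⟩
  let U' : Subrepresentation ρ := ⟨U, fun g => Submodule.map_le_iff_le_comap.1 (hU g)⟩
  exact (hW.le_iff.1 (show U' ≤ W from hUW)).imp
    (congrArg Subrepresentation.toSubmodule) (congrArg Subrepresentation.toSubmodule)

end Irreducible

section Isotypic

variable {k A S N ι : Type*}

theorem isIsotypicOfType_pi [Ring A] [AddCommGroup S] [Module A S] [IsSimpleModule A S] :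
    IsIsotypicOfType A (ι → S) S := by
  intro M _
  have : Nontrivial M := IsSimpleModule.nontrivial A M
  obtain ⟨m, hm⟩ := exists_ne (0 : M)
  obtain ⟨i, hi⟩ : ∃ i, (m : ι → S) i ≠ 0 :=
    Function.ne_iff.1 fun h => hm (Subtype.ext h)
  let f : M →ₗ[A] S := LinearMap.proj i ∘ₗ M.subtype
  exact ⟨.ofBijective f (f.bijective_of_ne_zero fun h => hi congr($h m))⟩

theorem finrank_dvd_finrank_of_injective_pi [Field k] [Ring A] [Algebra k A]
    [AddCommGroup S] [Module k S] [Module A S] [IsScalarTower k A S] [IsSimpleModule A S]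
    [AddCommGroup N] [Module k N] [Module A N] [IsScalarTower k A N] [Module.Finite A N]
    [Finite ι] (f : N →ₗ[A] ι → S) (hf : Function.Injective f) :
    finrank k S ∣ finrank k N := by
  have := IsSemisimpleModule.of_injective f hf
  obtain ⟨n, ⟨e⟩⟩ := (isIsotypicOfType_pi.of_injective f hf).linearEquiv_fun
  rw [(e.restrictScalars k).finrank_eq, finrank, finrank, rank_fun_eq_lift_mul, map_mul,
    Cardinal.toNat_lift]
  exact dvd_mul_left _ _

theorem finrank_dvd_finrank_of_jointly_injective {G V X : Type*} [Field k] [Monoid G]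
    [AddCommGroup V] [Module k V] [AddCommGroup X] [Module k X] [FiniteDimensional k X]
    (ρ : Representation k G V) [ρ.IsIrreducible] {σ : Representation k G X}
    [Finite ι] (f : ι → IntertwiningMap σ ρ) (hf : ∀ x, (∀ i, f i x = 0) → x = 0) :
    finrank k V ∣ finrank k X := by
  have : Module.Finite k[G] σ.asModule := .of_restrictScalars_finite k _ _
  refine finrank_dvd_finrank_of_injective_pi (k := k) (A := k[G]) (S := ρ.asModule)
    (N := σ.asModule) (LinearMap.pi fun i => IntertwiningMap.equivLinearMapAsModule σ ρ (f i)) ?_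
  rw [← LinearMap.ker_eq_bot, LinearMap.ker_eq_bot']
  exact fun x hx => hf x fun i => congrFun hx i

end Isotypic

section BaseChange

variable {k : Type*} (L : Type*) {G V : Type*} [Field k] [Field L] [Algebra k L] [Monoid G]
  [AddCommGroup V] [Module k V]

/-- The extension of scalars `L ⊗ V` of a representation `V` over `k` to a field extension `L`. -/
def baseChange (ρ : Representation k G V) : Representation L G (L ⊗[k] V) :=
  (Module.End.baseChangeHom k L V : Module.End k V →* Module.End L (L ⊗[k] V)).comp ρ

/-- A representation over `L` viewed as a representation over `k`. -/
def restrictScalars {L X : Type*} (k : Type*) [CommSemiring k] [CommSemiring L]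
    [Algebra k L] [AddCommMonoid X] [Module L X] [Module k X] [IsScalarTower k L X]
    (σ : Representation L G X) : Representation k G X where
  toFun g := (σ g).restrictScalars k
  map_one' := by ext; simp
  map_mul' _ _ := by ext; simp

/-- The equivariant map `L ⊗ V → k ⊗ V ≅ V` induced by a linear form `φ : L → k`. -/
def baseChangeProj (φ : L →ₗ[k] k) (ρ : Representation k G V) :
    IntertwiningMap (restrictScalars k (baseChange L ρ)) ρ where
  toLinearMap := TensorProduct.lid k V ∘ₗ φ.rTensor V
  isIntertwining' g := by
    refine TensorProduct.ext' fun a v => ?_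
    exact (map_smul (ρ g) (φ a) v).symm

theorem finrank_dvd_finrank_mul_finrank_subrepresentation [FiniteDimensional k L]
    [FiniteDimensional k V] {ρ : Representation k G V} [ρ.IsIrreducible]
    (W : Subrepresentation (baseChange L ρ)) :
    finrank k V ∣ finrank k L * finrank L W.toSubmodule := by
  have : Free L W.toSubmodule := Free.of_divisionRing L W.toSubmodule
  rw [finrank_mul_finrank k L W.toSubmodule]
  have : Module.Finite k W.toSubmodule := .trans L W.toSubmodule
  let b := finBasis k L
  let incl : IntertwiningMap (restrictScalars k W.toRepresentation)
      (restrictScalars k (baseChange L ρ)) :=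
    { toLinearMap := W.toSubmodule.subtype.restrictScalars k
      isIntertwining' _ := LinearMap.ext fun _ => rfl }
  refine finrank_dvd_finrank_of_jointly_injective (X := W.toSubmodule)
    (σ := restrictScalars k W.toRepresentation) ρ
    (fun i => (baseChangeProj L (b.coord i) ρ).comp incl) fun w hw => Subtype.ext ?_
  refine (TensorProduct.equivFinsuppOfBasisLeft b).map_eq_zero_iff.1 (Finsupp.ext fun i => ?_)
  exact (TensorProduct.equivFinsuppOfBasisLeft_apply b _ i).trans (hw i)

end BaseChange

section Imprimitivity

variable {k G V : Type*} [Field k] [Group G] [AddCommGroup V] [Module k V]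

/-- The action of `G` by translation on the subspaces of a representation. It depends on `ρ`, hence
is not an instance. -/
abbrev subspaceAction (ρ : Representation k G V) : MulAction G (Submodule k V) where
  smul g U := U.map (ρ g)
  one_smul U := (congrArg U.map (map_one ρ)).trans U.map_id
  mul_smul g h U := (congrArg U.map (map_mul ρ g h)).trans (U.map_comp _ _)

/-- The translates of a subspace under `G`. -/
def translates (ρ : Representation k G V) (U : Submodule k V) : Set (Submodule k V) :=
  Set.range fun g => U.map (ρ g)

/-- The subgroup of elements mapping a subspace onto itself. -/
def subspaceStabilizer (ρ : Representation k G V) (U : Submodule k V) : Subgroup G :=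
  letI := subspaceAction ρ
  MulAction.stabilizer G U

/-- A subspace as a representation of its stabilizer. -/
def stabilizerSubrep (ρ : Representation k G V) (U : Submodule k V) :
    Subrepresentation (ρ.comp (subspaceStabilizer ρ U).subtype) where
  toSubmodule := U
  apply_mem_toSubmodule g _ hv :=
    (Submodule.map_le_iff_le_comap.1 (show U.map (ρ g) = U from g.2).le) hv

variable {ρ : Representation k G V} {U : Submodule k V}

theorem index_subspaceStabilizer :
    (subspaceStabilizer ρ U).index = (translates ρ U).ncard :=
  letI := subspaceAction ρ
  MulAction.index_stabilizer G U

theorem finrank_of_mem_translates {E : Submodule k V} (hE : E ∈ translates ρ U) :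
    finrank k E = finrank k U := by
  obtain ⟨g, rfl⟩ := hE
  exact (U.equivMapOfInjective (ρ g) (ρ.apply_bijective g).1).finrank_eq.symm

theorem self_mem_translates : U ∈ translates ρ U :=
  ⟨1, (congrArg U.map (map_one ρ)).trans U.map_id⟩

theorem sSup_translates_eq_top [ρ.IsIrreducible] (hU : U ≠ ⊥) : sSup (translates ρ U) = ⊤ := by
  have hle : U ≤ sSup (translates ρ U) := le_sSup self_mem_translates
  refine (eq_bot_or_eq_top_of_map_le (ρ := ρ) fun g => ?_).resolve_left fun h =>
    hU (le_bot_iff.1 (h ▸ hle))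
  rw [translates, sSup_range, Submodule.map_iSup]
  refine iSup_le fun h => ?_
  rw [← Submodule.map_comp, ← Module.End.mul_eq_comp, ← map_mul]
  exact le_iSup (fun h => U.map (ρ h)) (g * h)

theorem finrank_eq_index_mul_finrank [FiniteDimensional k V] [ρ.IsIrreducible] (hU : U ≠ ⊥)
    (hind : sSupIndep (translates ρ U)) :
    finrank k V = (subspaceStabilizer ρ U).index * finrank k U := by
  classical
  have := (WellFoundedGT.finite_of_sSupIndep hind).fintype
  have hint : DirectSum.IsInternal ((↑) : translates ρ U → Submodule k V) :=
    DirectSum.isInternal_submodule_of_iSupIndep_of_iSup_eq_top ((sSupIndep_iff _).1 hind)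
      (sSup_eq_iSup' (translates ρ U) ▸ sSup_translates_eq_top hU)
  rw [← (LinearEquiv.ofBijective (DirectSum.coeLinearMap _) hint).finrank_eq, finrank_directSum,
    Finset.sum_congr rfl fun E _ => finrank_of_mem_translates E.2, Finset.sum_const,
    Finset.card_univ, index_subspaceStabilizer, ← Nat.card_coe_set_eq, Nat.card_eq_fintype_card,
    smul_eq_mul]

theorem isIrreducible_stabilizerSubrep [ρ.IsIrreducible] (hU : U ≠ ⊥)
    (hind : sSupIndep (translates ρ U)) :
    (stabilizerSubrep ρ U).toRepresentation.IsIrreducible := by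
  refine isIrreducible_toRepresentation hU fun W hWU hW => or_iff_not_imp_left.2 fun hW0 => ?_
  have htop : W ⊔ sSup (translates ρ U \ {U}) = ⊤ := by
    rw [eq_top_iff, ← sSup_translates_eq_top (ρ := ρ) hW0]
    refine sSup_le ?_
    rintro _ ⟨g, rfl⟩
    by_cases hg : U.map (ρ g) = U
    · exact le_sup_of_le_left (hW ⟨g, hg⟩)
    · exact le_sup_of_le_right ((Submodule.map_mono hWU).trans (le_sSup ⟨⟨g, rfl⟩, hg⟩))
  have hdisj : Disjoint U (sSup (translates ρ U \ {U})) := hind self_mem_translates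
  exact eq_of_le_of_inf_le_of_sup_le hWU (hdisj.eq_bot ▸ bot_le) (htop ▸ le_top)

end Imprimitivity

section ProjectiveKernel

variable {k G V : Type*} [Field k] [Group G] [AddCommGroup V] [Module k V]

/-- The kernel of the projective representation attached to `ρ`: the elements acting by scalars. -/
def projectiveKernel (ρ : Representation k G V) : Subgroup G where
  carrier := {g | ∃ c : kˣ, ρ g = algebraMap k (End k V) c}
  one_mem' := ⟨1, by simp⟩
  mul_mem' := by
    rintro g h ⟨c, hc⟩ ⟨d, hd⟩
    exact ⟨c * d, by rw [map_mul, hc, hd, Units.val_mul, map_mul]⟩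
  inv_mem' := by
    rintro g ⟨c, hc⟩
    refine ⟨c⁻¹, left_inv_eq_right_inv (a := ρ g) ?_ ?_⟩
    · rw [← map_mul, inv_mul_cancel, map_one]
    · rw [hc, ← map_mul, Units.mul_inv, map_one]

instance (ρ : Representation k G V) : (projectiveKernel ρ).Normal where
  conj_mem := by
    rintro g ⟨c, hc⟩ h
    refine ⟨c, ?_⟩
    rw [map_mul, map_mul, hc, ← Algebra.commutes, mul_assoc, ← map_mul, mul_inv_cancel, map_one,
      mul_one]

variable {ρ : Representation k G V}

theorem finrank_eq_one_of_projectiveKernel_eq_top [ρ.IsIrreducible]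
    (h : projectiveKernel ρ = ⊤) : finrank k V = 1 := by
  have : Nontrivial V := (isIrreducibleRep_iff_isIrreducible.2 ‹ρ.IsIrreducible›).1
  obtain ⟨v, hv⟩ := exists_ne (0 : V)
  have hspan : Submodule.span k {v} = ⊤ := by
    refine (eq_bot_or_eq_top_of_map_le (ρ := ρ) fun g => ?_).resolve_left (by simpa using hv)
    obtain ⟨c, hc⟩ : g ∈ projectiveKernel ρ := h ▸ Subgroup.mem_top g
    rintro _ ⟨x, hx, rfl⟩
    rw [hc]
    exact Submodule.smul_mem _ (c : k) hx
  rw [← finrank_top, ← hspan, finrank_span_singleton hv]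

theorem map_eigenspace_of_commutatorElement_mem {g h : G} (hgh : ⁅g, h⁆ ∈ projectiveKernel ρ)
    (a : k) : ∃ b, (End.eigenspace (ρ g) a).map (ρ h) = End.eigenspace (ρ g) b := by
  obtain ⟨c, hc⟩ := hgh
  have hcomm (x : V) : ρ g (ρ h x) = (c : k) • ρ h (ρ g x) := by
    have : ρ g * ρ h = algebraMap k (End k V) c * (ρ h * ρ g) := by
      rw [← hc, ← map_mul, ← map_mul, ← map_mul, commutatorElement_def]
      group
    exact congr($this x)
  refine ⟨c * a, ?_⟩
  rw [← Submodule.map_comap_eq_of_surjective (ρ.apply_bijective h).2 (End.eigenspace (ρ g) (c * a))]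
  congr 1
  ext x
  rw [Submodule.mem_comap, End.mem_eigenspace_iff, End.mem_eigenspace_iff, hcomm, mul_smul,
    (smul_right_injective V c.ne_zero).eq_iff, ← map_smul, (ρ.apply_bijective h).1.eq_iff]

theorem sSupIndep_translates_eigenspace {g : G} (hg : ∀ h, ⁅g, h⁆ ∈ projectiveKernel ρ) (a : k) :
    sSupIndep (translates ρ (End.eigenspace (ρ g) a)) := by
  refine (End.eigenspaces_iSupIndep (ρ g)).sSupIndep_range.mono ?_
  rintro _ ⟨h, rfl⟩
  obtain ⟨b, hb⟩ := map_eigenspace_of_commutatorElement_mem (hg h) a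
  exact ⟨b, hb.symm⟩

theorem mem_projectiveKernel_of_eigenspace_eq_top [Nontrivial V] {g : G} {a : k}
    (h : End.eigenspace (ρ g) a = ⊤) : g ∈ projectiveKernel ρ := by
  have hg : ρ g = algebraMap k (End k V) a :=
    LinearMap.ext fun x => End.mem_eigenspace_iff.1 (h ▸ Submodule.mem_top)
  refine ⟨Units.mk0 a fun ha => ?_, hg⟩
  obtain ⟨v, hv⟩ := exists_ne (0 : V)
  exact hv ((ρ.apply_bijective g).1 (by simp [hg, ha]))

end ProjectiveKernel

section NilpotentGroup

theorem exists_notMem_forall_commutatorElement_mem {G : Type*} [Group G] [Group.IsNilpotent G]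
    {K : Subgroup G} [K.Normal] (hK : K ≠ ⊤) : ∃ g ∉ K, ∀ h, ⁅g, h⁆ ∈ K := by
  have : Nontrivial (G ⧸ K) := QuotientGroup.nontrivial_iff.2 hK
  obtain ⟨⟨z, hz⟩, hz1⟩ := Subgroup.ne_bot_iff_exists_ne_one.1
    (Group.IsNilpotent.center_ne_bot (G := G ⧸ K))
  obtain ⟨g, rfl⟩ := QuotientGroup.mk_surjective z
  refine ⟨g, fun hg => hz1 (Subtype.ext ((QuotientGroup.eq_one_iff g).2 hg)), fun h => ?_⟩
  rw [← QuotientGroup.eq_one_iff, ← QuotientGroup.mk'_apply, map_commutatorElement,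
    commutatorElement_eq_one_iff_mul_comm]
  exact (Subgroup.mem_center_iff.1 hz h).symm

theorem exists_hasEigenvalue_of_splits {k V : Type*} [Field k] [AddCommGroup V] [Module k V]
    [FiniteDimensional k V] [Nontrivial V] {T : End k V} {f : k[X]} (hf0 : f ≠ 0)
    (hf : f.Splits) (hT : aeval T f = 0) : ∃ a, End.HasEigenvalue T a := by
  obtain ⟨a, ha⟩ := (hf.of_dvd hf0 (minpoly.dvd k T hT)).exists_eval_eq_zero
    (minpoly.degree_pos (Algebra.IsIntegral.isIntegral T)).ne'
  exact ⟨a, End.hasEigenvalue_of_isRoot ha⟩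

theorem exists_finrank_eq_index_mul_of_projectiveKernel_ne_top {k G V : Type*} [Field k] [Group G]
    [Finite G] [Group.IsNilpotent G] [AddCommGroup V] [Module k V] [FiniteDimensional k V]
    (hk : (X ^ Monoid.exponent G - 1 : k[X]).Splits) {ρ : Representation k G V} [ρ.IsIrreducible]
    (hρ : projectiveKernel ρ ≠ ⊤) :
    ∃ (H : Subgroup G) (W : Subrepresentation (ρ.comp H.subtype)), H ≠ ⊤ ∧
      W.toRepresentation.IsIrreducible ∧ finrank k V = H.index * finrank k W.toSubmodule := by
  have : Nontrivial V := (isIrreducibleRep_iff_isIrreducible.2 ‹ρ.IsIrreducible›).1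
  obtain ⟨g, hg, hcomm⟩ := exists_notMem_forall_commutatorElement_mem hρ
  obtain ⟨a, ha⟩ : ∃ a, End.HasEigenvalue (ρ g) a := by
    refine exists_hasEigenvalue_of_splits
      (X_pow_sub_C_ne_zero Monoid.exponent_ne_zero_of_finite.bot_lt 1) hk ?_
    rw [map_sub, map_pow, aeval_X, map_one, ← map_pow, Monoid.pow_exponent_eq_one, map_one,
      map_one, sub_self]
  have hind := sSupIndep_translates_eigenspace hcomm a
  refine ⟨_, stabilizerSubrep ρ (End.eigenspace (ρ g) a), fun hH => hg ?_,
    isIrreducible_stabilizerSubrep ha hind, finrank_eq_index_mul_finrank ha hind⟩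
  refine mem_projectiveKernel_of_eigenspace_eq_top (a := a) <|
    (eq_bot_or_eq_top_of_map_le (ρ := ρ) fun h => ?_).resolve_left ha
  exact (show h ∈ subspaceStabilizer ρ _ from hH ▸ Subgroup.mem_top h).le

theorem splits_X_pow_sub_one_of_dvd {k : Type*} [Field k] {m n : ℕ} (hn : n ≠ 0) (hmn : m ∣ n)
    (h : (X ^ n - 1 : k[X]).Splits) : (X ^ m - 1 : k[X]).Splits := by
  refine h.of_dvd (X_pow_sub_C_ne_zero hn.bot_lt 1) ?_
  obtain ⟨d, rfl⟩ := hmn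
  rw [pow_mul]
  exact sub_one_dvd_pow_sub_one _ _

theorem finrank_dvd_card_of_splits {k G V : Type*} [Field k] [Group G] [Finite G]
    [Group.IsNilpotent G] [AddCommGroup V] [Module k V] [FiniteDimensional k V]
    (hk : (X ^ Monoid.exponent G - 1 : k[X]).Splits) (ρ : Representation k G V)
    [ρ.IsIrreducible] : finrank k V ∣ Nat.card G := by
  induction hn : Nat.card G using Nat.strong_induction_on generalizing G V with
  | _ n ih =>
    by_cases hρ : projectiveKernel ρ = ⊤
    · rw [finrank_eq_one_of_projectiveKernel_eq_top hρ]
      exact one_dvd n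
    obtain ⟨H, W, hH, hW, hV⟩ :=
      exists_finrank_eq_index_mul_of_projectiveKernel_ne_top hk hρ
    have hlt : Nat.card H < n :=
      hn ▸ lt_of_le_of_ne H.card_le_card_group (mt H.eq_top_of_card_eq hH)
    have hkH : (X ^ Monoid.exponent H - 1 : k[X]).Splits :=
      splits_X_pow_sub_one_of_dvd Monoid.exponent_ne_zero_of_finite
        (Monoid.exponent_submonoid_dvd H.toSubmonoid) hk
    have hWH : finrank k W.toSubmodule ∣ Nat.card H :=
      ih _ hlt (G := H) (V := W.toSubmodule) hkH W.toRepresentation rfl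
    rw [hV, ← hn, ← H.index_mul_card]
    exact mul_dvd_mul_left _ hWH

end NilpotentGroup

section Cyclotomic

universe u

theorem finrank_cyclotomicField_dvd_totient (k : Type*) [Field k] (n : ℕ) [NeZero (n : k)] :
    finrank k (CyclotomicField n k) ∣ n.totient := by
  have : NeZero n := .of_neZero_natCast k
  have : FiniteDimensional k (CyclotomicField n k) :=
    IsCyclotomicExtension.finiteDimensional {n} k _
  have := IsCyclotomicExtension.isGalois {n} k (CyclotomicField n k)
  rw [← IsGalois.card_aut_eq_finrank, ← ZMod.card_units_eq_totient, ← Nat.card_eq_fintype_card]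
  exact Subgroup.card_dvd_of_injective _
    ((IsCyclotomicExtension.zeta_spec n k (CyclotomicField n k)).autToPow_injective k)

theorem exists_eq_expChar_pow_mul (k : Type*) [Field k] (q : ℕ) [hq : ExpChar k q] {n : ℕ}
    (hn : n ≠ 0) : ∃ a m : ℕ, (m : k) ≠ 0 ∧ n = q ^ a * m := by
  cases hq with
  | zero => exact ⟨0, n, Nat.cast_ne_zero.2 hn, by rw [pow_zero, one_mul]⟩
  | prime hq =>
    obtain ⟨a, m, hm, hnm⟩ := Nat.exists_eq_pow_mul_and_not_dvd hn q hq.ne_one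
    exact ⟨a, m, mt (CharP.cast_eq_zero_iff k q m).1 hm, hnm⟩

theorem exists_splits_X_pow_sub_one_finrank_dvd_totient (k : Type u) [Field k] {n : ℕ}
    (hn : n ≠ 0) :
    ∃ (L : Type u) (_ : Field L) (_ : Algebra k L), FiniteDimensional k L ∧
      finrank k L ∣ n.totient ∧ (X ^ n - 1 : L[X]).Splits := by
  obtain ⟨q, _⟩ := ExpChar.exists k
  obtain ⟨a, m, hm, rfl⟩ := exists_eq_expChar_pow_mul k q hn
  have : NeZero (m : k) := ⟨hm⟩
  have : NeZero m := .of_neZero_natCast k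
  let L := CyclotomicField m k
  refine ⟨L, inferInstance, inferInstance, IsCyclotomicExtension.finiteDimensional {m} k _,
    (finrank_cyclotomicField_dvd_totient k m).trans (Nat.totient_dvd_of_dvd (dvd_mul_left _ _)), ?_⟩
  have : ExpChar L q := expChar_of_injective_algebraMap (algebraMap k L).injective q
  have : (X ^ (q ^ a * m) - 1 : L[X]) = (X ^ m - 1) ^ q ^ a := by
    rw [sub_pow_expChar_pow, one_pow, ← pow_mul, mul_comm]
  rw [this]
  exact (X_pow_sub_one_splits (IsCyclotomicExtension.zeta_spec m k L)).pow _

end Cyclotomic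

theorem finrank_dvd_totient_exponent_mul_card {k G V : Type*} [Field k] [Group G] [Finite G]
    [Group.IsNilpotent G] [AddCommGroup V] [Module k V] [FiniteDimensional k V]
    (ρ : Representation k G V) [ρ.IsIrreducible] :
    finrank k V ∣ (Monoid.exponent G).totient * Nat.card G := by
  obtain ⟨L, _, _, _, hL, hsplit⟩ :=
    exists_splits_X_pow_sub_one_finrank_dvd_totient k (Monoid.exponent_ne_zero_of_finite (G := G))
  have : Nontrivial V := (isIrreducibleRep_iff_isIrreducible.2 ‹ρ.IsIrreducible›).1
  obtain ⟨W, _⟩ := exists_isIrreducible_toRepresentation (baseChange L ρ)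
  exact (finrank_dvd_finrank_mul_finrank_subrepresentation L W).trans
    (mul_dvd_mul hL (finrank_dvd_card_of_splits (V := W.toSubmodule) hsplit W.toRepresentation))

end IrreducibleDimension

open IrreducibleDimension in
theorem finrank_irreducible_rep_isPGroup_dvd_finiteField_general (p : ℕ) (hp : p.Prime)
    (k : Type*) [Field k]
    (G : Type*) [Group G] [Finite G] (hG : IsPGroup p G)
    (V : Type*) [AddCommGroup V] [Module k V] [FiniteDimensional k V]
    (ρ : Representation k G V) (hirr : ρ.IsIrreducibleRep) :
    ∃ j : ℕ, Module.finrank k V ∣ (p - 1) * p ^ j := by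
  have := Fact.mk hp
  have := isIrreducibleRep_iff_isIrreducible.1 hirr
  have : Group.IsNilpotent G := hG.isNilpotent
  obtain ⟨n, hn⟩ := IsPGroup.iff_card.1 hG
  obtain ⟨m, hm⟩ := (isPGroup_iff_exponent_eq_pow).1 hG
  have htot : (p ^ m).totient ∣ (p - 1) * p ^ m := by
    rw [mul_comm, ← Nat.totient_prime_pow_succ hp]
    exact Nat.totient_dvd_of_dvd (pow_dvd_pow p m.le_succ)
  refine ⟨m + n, ?_⟩
  calc Module.finrank k V ∣ (Monoid.exponent G).totient * Nat.card G :=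
        finrank_dvd_totient_exponent_mul_card ρ
    _ = (p ^ m).totient * p ^ n := by rw [hm, hn]
    _ ∣ (p - 1) * p ^ m * p ^ n := mul_dvd_mul_right htot _
    _ = (p - 1) * p ^ (m + n) := by rw [mul_assoc, pow_add]

/-- The dimension of every irreducible representation of a finite `p`-group over a
finite field of characteristic `≠ p` divides `(p-1)·p^j` for some `j`. -/
theorem finrank_irreducible_rep_isPGroup_dvd_finiteField (p : ℕ) (hp : p.Prime)
    (k : Type*) [Field k] [Finite k] (hchar : ringChar k ≠ p)
    (G : Type*) [Group G] [Finite G] (hG : IsPGroup p G)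
    (V : Type*) [AddCommGroup V] [Module k V] [FiniteDimensional k V]
    (ρ : Representation k G V) (hirr : ρ.IsIrreducibleRep) :
    ∃ j : ℕ, Module.finrank k V ∣ (p - 1) * p ^ j :=
  finrank_irreducible_rep_isPGroup_dvd_finiteField_general p hp k G hG V ρ hirr
end

section
/- Let G be a topologically finitely generated profinite group and n ∈ ℕ. Then there are only finitely many homomorphisms ψ : G → GL_n(ℚ) with open kernel, up to conjugation: there exist finitely many homomorphisms ψ_1, …, ψ_r : G → GL_n(ℚ), each with open kernel, such that every homomorphism ψ : G → GL_n(ℚ) with open kernel satisfies ψ = g ψ_i(·) g^{−1} for some i ∈ {1, …, r} and some g ∈ GL_n(ℚ). -/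
open Matrix

/-!
A homomorphism `ψ` from a group to `GL_n(ℚ)` with finite image stabilises the lattice spanned by
the orbit of a basis, so it is conjugate to some `φ` with values in `GL_n(ℤ)`. By Minkowski,
reduction modulo `3` does not enlarge the kernel of `φ`: if `A` has finite order and
`A = 1 + 3 B`, then the entries of `(A - 1) ^ k = 3 ^ k B ^ k` are divisible by `3 ^ k`, while the
binomial expansion bounds them by `2 ^ k C`, where `C` bounds the entries of the finitely many
powers of `A`; hence `A - 1` is nilpotent, and `A = 1`.

Thus `ker ψ` is the kernel of a homomorphism to the finite group `GL_n(ℤ/3)`. There are only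
finitely many of these with open kernel, since each is determined by its values on a finite
topologically generating set, so all `ψ` factor through a single finite quotient `Q`. By Maschke the
`ℚ[Q]`-module attached to `ψ` is a quotient of the semisimple module `ℚ[Q] ^ n` of finite length,
which has finitely many quotients up to isomorphism.
-/

section Minkowski

theorem abs_map_sub_one_pow_mul_pow_le {R M : Type*} [Ring R] [AddCommGroup M] [LinearOrder M]
    [IsOrderedAddMonoid M] (f : R →+ M) {a : R} {C : M} (hC : ∀ j : ℕ, |f (a ^ j)| ≤ C)
    (k j : ℕ) : |f ((a - 1) ^ k * a ^ j)| ≤ 2 ^ k • C := by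
  induction k generalizing j with
  | zero => simpa using hC j
  | succ k ih =>
    have hsplit : (a - 1) ^ (k + 1) * a ^ j = (a - 1) ^ k * a ^ (j + 1) - (a - 1) ^ k * a ^ j := by
      rw [pow_succ, pow_succ' a]
      noncomm_ring
    calc |f ((a - 1) ^ (k + 1) * a ^ j)|
        ≤ |f ((a - 1) ^ k * a ^ (j + 1))| + |f ((a - 1) ^ k * a ^ j)| := by
          rw [hsplit, map_sub]
          exact abs_sub _ _
      _ ≤ 2 ^ k • C + 2 ^ k • C := add_le_add (ih _) (ih _)
      _ = 2 ^ (k + 1) • C := by rw [← add_nsmul, pow_succ, mul_two]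

theorem eq_one_of_pow_eq_one_of_isNilpotent_sub_one {R : Type*} [Ring R] [IsAddTorsionFree R]
    {a : R} {m : ℕ} (hm : m ≠ 0) (ha : a ^ m = 1) (hnil : IsNilpotent (a - 1)) : a = 1 := by
  have descend (k : ℕ) (hk : (a - 1) ^ (k + 2) = 0) : (a - 1) ^ (k + 1) = 0 := by
    have hfix (i : ℕ) : (a - 1) ^ (k + 1) * a ^ i = (a - 1) ^ (k + 1) := by
      have : (a - 1) ^ (k + 1) * a = (a - 1) ^ (k + 1) := by
        rwa [pow_succ _ (k + 1), mul_sub_one, sub_eq_zero] at hk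
      induction i with
      | zero => simp
      | succ i ih => rw [pow_succ a, ← mul_assoc, ih, this]
    have hsum : m • (a - 1) ^ (k + 1) = 0 := by
      calc m • (a - 1) ^ (k + 1)
          = (a - 1) ^ (k + 1) * ∑ i ∈ Finset.range m, a ^ i := by
            simp [Finset.mul_sum, hfix]
        _ = (a - 1) ^ k * (a ^ m - 1) := by rw [pow_succ, mul_assoc, mul_geom_sum]
        _ = 0 := by rw [ha, sub_self, mul_zero]
    exact (nsmul_eq_zero_iff_right hm).1 hsum
  obtain ⟨k, hk⟩ := hnil
  rw [← sub_eq_zero]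
  induction k with
  | zero => rw [← mul_one (a - 1), ← pow_zero (a - 1), hk, mul_zero]
  | succ k ih =>
    cases k with
    | zero => simpa using hk
    | succ k => exact ih (descend k hk)

variable {ι : Type*} [Fintype ι] [DecidableEq ι] {d : ℕ}

theorem exists_eq_smul_of_map_intCast_eq_zero {m n : Type*} {A : Matrix m n ℤ}
    (h : A.map (Int.cast : ℤ → ZMod d) = 0) : ∃ B : Matrix m n ℤ, A = (d : ℤ) • B := by
  have hdvd (i : m) (j : n) : (d : ℤ) ∣ A i j :=
    (ZMod.intCast_zmod_eq_zero_iff_dvd _ d).1 (congrFun₂ h i j)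
  choose B hB using hdvd
  exact ⟨of B, by ext i j; simpa using hB i j⟩

theorem isNilpotent_sub_one_of_isOfFinOrder (hd : 2 < d) {A B : Matrix ι ι ℤ}
    (hA : IsOfFinOrder A) (hB : A - 1 = (d : ℤ) • B) : IsNilpotent (A - 1) := by
  obtain ⟨C, hC⟩ : ∃ C : ℤ, ∀ i l, ∀ j : ℕ, |(A ^ j) i l| ≤ C := by
    have hfin : (Set.image2 (fun (P : Matrix ι ι ℤ) (p : ι × ι) ↦ |P p.1 p.2|)
        (Submonoid.powers A) Set.univ).Finite := hA.finite_powers.image2 _ Set.finite_univ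
    obtain ⟨C, hC⟩ := hfin.bddAbove
    exact ⟨C, fun i l j ↦ hC ⟨A ^ j, ⟨j, rfl⟩, (i, l), Set.mem_univ _, rfl⟩⟩
  obtain ⟨k, hk⟩ : ∃ k : ℕ, 2 ^ k * C < (d : ℤ) ^ k := by
    have hone : 1 < (d / 2 : ℚ) := by
      rw [one_lt_div two_pos]
      exact_mod_cast hd
    obtain ⟨k, hk⟩ := pow_unbounded_of_one_lt (C : ℚ) hone
    rw [div_pow, lt_div_iff₀' (by positivity)] at hk
    exact ⟨k, by exact_mod_cast hk⟩
  refine ⟨k, ?_⟩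
  ext i l
  refine Int.eq_zero_of_abs_lt_dvd (m := (d : ℤ) ^ k) ⟨(B ^ k) i l, ?_⟩ (lt_of_le_of_lt ?_ hk)
  · rw [hB, smul_pow, Matrix.smul_apply, smul_eq_mul]
  · simpa using abs_map_sub_one_pow_mul_pow_le (entryAddMonoidHom ℤ i l) (hC i l) k 0

theorem eq_one_of_isOfFinOrder_of_map_intCast_eq_one (hd : 2 < d) {g : GL ι ℤ}
    (hg : IsOfFinOrder g) (h : GeneralLinearGroup.map (Int.castRingHom (ZMod d)) g = 1) :
    g = 1 := by
  have hg' : IsOfFinOrder (g : Matrix ι ι ℤ) := (Units.coeHom _).isOfFinOrder hg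
  have hmod : (g.val - 1).map (Int.cast : ℤ → ZMod d) = 0 := by
    change (Int.castRingHom (ZMod d)).mapMatrix (g.val - 1) = 0
    rw [map_sub, map_one, sub_eq_zero]
    exact congrArg Units.val h
  obtain ⟨B, hB⟩ := exists_eq_smul_of_map_intCast_eq_zero hmod
  obtain ⟨m, hm, hgm⟩ := isOfFinOrder_iff_pow_eq_one.1 hg'
  have : IsAddTorsionFree (Matrix ι ι ℤ) := inferInstanceAs (IsAddTorsionFree (ι → ι → ℤ))
  exact Units.ext <| eq_one_of_pow_eq_one_of_isNilpotent_sub_one hm.ne' hgm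
    (isNilpotent_sub_one_of_isOfFinOrder hd hg' hB)

end Minkowski

section SemisimpleModule

theorem exists_subset_isCompl_sSup {α : Type*} [CompleteLattice α] [IsModularLattice α]
    {s : Set α} (hs : s.Finite) (hatom : ∀ a ∈ s, IsAtom a) (htop : sSup s = ⊤) (b : α) :
    ∃ t ⊆ s, IsCompl b (sSup t) := by
  have hfin : {t | t ⊆ s ∧ Disjoint b (sSup t)}.Finite := hs.powerset.subset fun t ht ↦ ht.1
  obtain ⟨t, ⟨hts, hbt⟩, hmax⟩ := hfin.exists_maximal ⟨∅, by simp⟩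
  refine ⟨t, hts, hbt, codisjoint_iff.2 <| eq_top_iff.2 <| htop ▸ sSup_le fun a ha ↦ ?_⟩
  by_contra hle
  have hdisj : Disjoint b (sSup (insert a t)) := by
    rw [sSup_insert, sup_comm]
    exact hbt.disjoint_sup_right_of_disjoint_sup_left ((hatom a ha).not_le_iff_disjoint.1 hle).symm
  have hat : a ∈ t := hmax ⟨Set.insert_subset ha hts, hdisj⟩ (Set.subset_insert a t)
    (Set.mem_insert a t)
  exact hle ((le_sSup hat).trans le_sup_right)

theorem exists_finite_forall_quotient_equiv (R M : Type*) [Ring R] [AddCommGroup M] [Module R M]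
    [IsSemisimpleModule R M] [Module.Finite R M] :
    ∃ T : Set (Submodule R M), T.Finite ∧
      ∀ N : Submodule R M, ∃ P ∈ T, Nonempty ((M ⧸ N) ≃ₗ[R] P) := by
  obtain ⟨s, hind, htop, hsimple⟩ := IsSemisimpleModule.exists_sSupIndep_sSup_simples_eq_top R M
  have hs : s.Finite := WellFoundedGT.finite_of_sSupIndep hind
  refine ⟨sSup '' s.powerset, hs.powerset.image _, fun N ↦ ?_⟩
  obtain ⟨t, hts, hcompl⟩ :=
    exists_subset_isCompl_sSup hs (fun S hS ↦ isSimpleModule_iff_isAtom.1 (hsimple S hS)) htop N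
  exact ⟨sSup t, ⟨t, hts, rfl⟩, ⟨Submodule.quotientEquivOfIsCompl _ _ hcompl⟩⟩

end SemisimpleModule

section Conjugation

/-- Conjugacy of homomorphisms to a group `H`, by elements of `H`; its quotient is the set of
classes to be counted. -/
def conjSetoid (G H : Type*) [Monoid G] [Group H] : Setoid (G →* H) where
  r ψ φ := ∃ g : H, ∀ x, ψ x = g * φ x * g⁻¹
  iseqv :=
    { refl := fun _ ↦ ⟨1, by simp⟩
      symm := fun ⟨g, hg⟩ ↦ ⟨g⁻¹, fun x ↦ by rw [hg x]; group⟩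
      trans := fun ⟨g, hg⟩ ⟨h, hh⟩ ↦ ⟨g * h, fun x ↦ by rw [hg x, hh x]; group⟩ }

theorem ker_eq_of_conjSetoid {G H : Type*} [Group G] [Group H] {ψ φ : G →* H}
    (h : conjSetoid G H ψ φ) : ψ.ker = φ.ker := by
  obtain ⟨g, hg⟩ := h
  ext x
  rw [MonoidHom.mem_ker, MonoidHom.mem_ker, hg x, conj_eq_one_iff]

variable {K ι G : Type*} [CommRing K] [Fintype ι] [DecidableEq ι] [Monoid G]

/-- The representation on column vectors `ι → K` attached to a homomorphism to `GL ι K`, through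
which conjugacy of homomorphisms becomes isomorphism of modules over the group algebra. -/
noncomputable def matrixRep (ψ : G →* GL ι K) : Representation K G (ι → K) :=
  (Units.coeHom _).comp (GeneralLinearGroup.toLin.toMonoidHom.comp ψ)

theorem matrixRep_apply (ψ : G →* GL ι K) (x : G) (v : ι → K) :
    matrixRep ψ x v = (ψ x : Matrix ι ι K) *ᵥ v := rfl

theorem finite_range_matrixRep {ψ : G →* GL ι K} (hψ : (Set.range ψ).Finite) :
    (Set.range (matrixRep ψ)).Finite := by
  unfold matrixRep
  rw [MonoidHom.coe_comp, Set.range_comp, MonoidHom.coe_comp, Set.range_comp]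
  exact (hψ.image _).image _

theorem conjSetoid_of_linearEquiv {ψ φ : G →* GL ι K} (e : (ι → K) ≃ₗ[K] (ι → K))
    (he : ∀ x v, e (matrixRep φ x v) = matrixRep ψ x (e v)) : conjSetoid G (GL ι K) ψ φ := by
  let g : GL ι K := GeneralLinearGroup.toLin.symm
    ((LinearMap.GeneralLinearGroup.generalLinearEquiv K (ι → K)).symm e)
  have hg (v : ι → K) : (g : Matrix ι ι K) *ᵥ v = e v := by
    change (GeneralLinearGroup.toLin g : (ι → K) →ₗ[K] ι → K) v = e v
    rw [MulEquiv.apply_symm_apply]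
    rfl
  refine ⟨g, fun x ↦ eq_mul_inv_of_mul_eq <| Units.ext <| mulVec_injective <| funext fun v ↦ ?_⟩
  simpa [hg, matrixRep_apply, ← mulVec_mulVec] using (he x v).symm

theorem conjSetoid_of_asModule_linearEquiv {ψ φ : G →* GL ι K}
    (e : (matrixRep φ).asModule ≃ₗ[MonoidAlgebra K G] (matrixRep ψ).asModule) :
    conjSetoid G (GL ι K) ψ φ :=
  conjSetoid_of_linearEquiv
    ((matrixRep φ).asModuleEquiv.symm ≪≫ₗ e.restrictScalars K ≪≫ₗ (matrixRep ψ).asModuleEquiv)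
    ((Representation.IntertwiningMap.equivLinearMapAsModule _ _).symm
      e.toLinearMap).isIntertwining

end Conjugation

section FiniteGroup

theorem exists_quotient_equiv_asModule {K ι G V : Type*} [CommRing K] [Finite ι] [Monoid G]
    [AddCommGroup V] [Module K V] (ρ : Representation K G V) (b : Module.Basis ι K V) :
    ∃ N : Submodule (MonoidAlgebra K G) (ι → MonoidAlgebra K G),
      Nonempty (((ι → MonoidAlgebra K G) ⧸ N) ≃ₗ[MonoidAlgebra K G] ρ.asModule) := by
  have := Fintype.ofFinite ι
  let c := b.map ρ.asModuleEquiv.symm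
  have hc : Submodule.span (MonoidAlgebra K G) (Set.range c) = ⊤ :=
    Submodule.span_eq_top_of_span_eq_top K _ _ c.span_eq
  have hsurj : Function.Surjective (Fintype.linearCombination (MonoidAlgebra K G) c) := by
    rw [← LinearMap.range_eq_top, Fintype.range_linearCombination, hc]
  exact ⟨_, ⟨LinearMap.quotKerEquivOfSurjective _ hsurj⟩⟩

theorem finite_quotient_conjSetoid (Q K ι : Type*) [Group Q] [Finite Q] [Field K]
    [NeZero (Nat.card Q : K)] [Fintype ι] [DecidableEq ι] :
    Finite (Quotient (conjSetoid Q (GL ι K))) := by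
  obtain ⟨T, hT, hTeq⟩ :=
    exists_finite_forall_quotient_equiv (MonoidAlgebra K Q) (ι → MonoidAlgebra K Q)
  have hmodel (ψ : Q →* GL ι K) :
      ∃ P : T, Nonempty ((matrixRep ψ).asModule ≃ₗ[MonoidAlgebra K Q] P) := by
    obtain ⟨N, ⟨e⟩⟩ := exists_quotient_equiv_asModule (matrixRep ψ) (Pi.basisFun K ι)
    obtain ⟨P, hP, ⟨e'⟩⟩ := hTeq N
    exact ⟨⟨P, hP⟩, ⟨e.symm.trans e'⟩⟩
  choose P e using hmodel
  have : Finite T := hT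
  refine Finite.of_injective (fun q ↦ P q.out) fun q q' (h : P q.out = P q'.out) ↦ ?_
  obtain ⟨e₁⟩ := e q.out
  obtain ⟨e₂⟩ := e q'.out
  rw [← h] at e₂
  exact Quotient.out_equiv_out.1 (conjSetoid_of_asModule_linearEquiv (e₂.trans e₁.symm))

end FiniteGroup

section InvariantLattice

variable {R K V : Type*}

/-- The restriction of a representation over `K` to a stable submodule over a smaller ring `R`,
such as an invariant lattice. -/
def restrictSubmodule {G : Type*} [CommSemiring R] [CommSemiring K] [Monoid G] [AddCommMonoid V]
    [Module R V] [Module K V] [SMul R K] [IsScalarTower R K V] (ρ : Representation K G V)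
    (L : Submodule R V) (hL : ∀ x, ∀ v ∈ L, ρ x v ∈ L) : Representation R G L where
  toFun x := ((ρ x).restrictScalars R).restrict (hL x)
  map_one' := LinearMap.ext fun v ↦ Subtype.ext congr($(map_one ρ) v)
  map_mul' x y := LinearMap.ext fun v ↦ Subtype.ext congr($(map_mul ρ x y) v)

variable [CommRing R] [AddCommGroup V] [Module R V]

theorem exists_isLattice_invariant {G : Type*} [Monoid G] [CommRing K] [Algebra R K]
    [Module K V] [IsScalarTower R K V] [Module.Finite K V] (ρ : Representation K G V)
    (hρ : (Set.range ρ).Finite) :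
    ∃ L : Submodule R V, L.IsLattice K ∧ ∀ x, ∀ v ∈ L, ρ x v ∈ L := by
  obtain ⟨S, hS⟩ := Module.Finite.fg_top (R := K) (M := V)
  let T : Set V := Set.image2 (fun (f : Module.End K V) v ↦ f v) (Set.range ρ) S
  have hST : (S : Set V) ⊆ T := fun v hv ↦ ⟨1, ⟨1, map_one ρ⟩, v, hv, rfl⟩
  refine ⟨Submodule.span R T, ⟨Submodule.fg_span (hρ.image2 _ S.finite_toSet), ?_⟩, fun x ↦ ?_⟩
  · rw [Submodule.span_span_of_tower, eq_top_iff, ← hS]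
    exact Submodule.span_mono hST
  · change Submodule.span R T ≤ (Submodule.span R T).comap ((ρ x).restrictScalars R)
    rw [Submodule.span_le]
    rintro _ ⟨_, ⟨y, rfl⟩, v, hv, rfl⟩
    exact Submodule.subset_span ⟨_, ⟨x * y, rfl⟩, v, hv, congr($(map_mul ρ x y) v)⟩

variable [Field K] [Algebra R K] [IsFractionRing R K] [Module K V] [IsScalarTower R K V]
  {κ : Type*} {L : Submodule R V} [L.IsLattice K]

theorem extendOfIsLattice_repr_coe (b : Module.Basis κ R L) (v : L) (i : κ) :
    (b.extendOfIsLattice K).repr v i = algebraMap R K (b.repr v i) := by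
  have hlin : (b.extendOfIsLattice K).repr.toLinearMap.restrictScalars R ∘ₗ L.subtype =
      Finsupp.mapRange.linearMap (Algebra.linearMap R K) ∘ₗ b.repr.toLinearMap :=
    b.ext fun j ↦ by
      change (b.extendOfIsLattice K).repr (b j).val =
        Finsupp.mapRange (algebraMap R K) (map_zero _) (b.repr (b j))
      rw [← b.extendOfIsLattice_apply K, Module.Basis.repr_self, Module.Basis.repr_self,
        Finsupp.mapRange_single, map_one]
  exact congr($hlin v i)

theorem toMatrix_extendOfIsLattice [Fintype κ] [DecidableEq κ] (b : Module.Basis κ R L)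
    (f : V →ₗ[K] V) (hf : ∀ v ∈ L, f v ∈ L) :
    LinearMap.toMatrix (b.extendOfIsLattice K) (b.extendOfIsLattice K) f =
      (LinearMap.toMatrix b b ((f.restrictScalars R).restrict hf)).map (algebraMap R K) := by
  ext i j
  rw [LinearMap.toMatrix_apply, b.extendOfIsLattice_apply K, Matrix.map_apply,
    LinearMap.toMatrix_apply, ← extendOfIsLattice_repr_coe (K := K)]
  rfl

end InvariantLattice

section IntegralForm

variable {G ι : Type*} [Group G] [Fintype ι] [DecidableEq ι]

theorem exists_conjSetoid_map_comp (R : Type*) {K : Type*} [CommRing R] [IsDomain R]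
    [IsPrincipalIdealRing R] [Field K] [Algebra R K] [IsFractionRing R K] (ψ : G →* GL ι K)
    (hψ : (Set.range ψ).Finite) :
    ∃ φ : G →* GL ι R,
      conjSetoid G (GL ι K) ψ ((GeneralLinearGroup.map (algebraMap R K)).comp φ) := by
  obtain ⟨L, hL, hinv⟩ :=
    exists_isLattice_invariant (R := R) (matrixRep ψ) (finite_range_matrixRep hψ)
  have : Module.Free R L := Submodule.IsLattice.free K L
  obtain ⟨b⟩ : Nonempty (Module.Basis ι R L) := ⟨.ofEquivFun <| .ofFinrankEq _ _ <| by
    rw [Submodule.IsLattice.finrank_of_pi K L, Module.finrank_pi]⟩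
  let c := b.extendOfIsLattice K
  let φ : G →* GL ι R := MonoidHom.toHomUnits <|
    (LinearMap.toMatrixAlgEquiv b : _ →* _).comp (restrictSubmodule (matrixRep ψ) L hinv)
  have hφ (x : G) :
      (φ x : Matrix ι ι R).map (algebraMap R K) = LinearMap.toMatrix c c (matrixRep ψ x) :=
    (toMatrix_extendOfIsLattice b (matrixRep ψ x) (hinv x)).symm
  refine ⟨φ, conjSetoid_of_linearEquiv c.equivFun.symm fun x v ↦ ?_⟩
  obtain ⟨w, rfl⟩ := c.equivFun.surjective v
  rw [LinearEquiv.symm_apply_eq, LinearEquiv.symm_apply_apply]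
  change (φ x : Matrix ι ι R).map (algebraMap R K) *ᵥ _ = _
  rw [hφ]
  exact LinearMap.toMatrix_mulVec_repr c c (matrixRep ψ x) w

theorem generalLinearGroup_map_injective {R S : Type*} [CommRing R] [CommRing S] {f : R →+* S}
    (hf : Function.Injective f) : Function.Injective (GeneralLinearGroup.map (n := ι) f) :=
  Units.map_injective (Matrix.map_injective hf)

theorem exists_ker_eq_of_finiteIndex_ker {d : ℕ} (hd : 2 < d) (ψ : G →* GL ι ℚ)
    [hψ : ψ.ker.FiniteIndex] : ∃ φ : G →* GL ι (ZMod d), φ.ker = ψ.ker := by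
  have hfin : (Set.range ψ).Finite :=
    Finite.of_equiv _ (QuotientGroup.quotientKerEquivRange ψ).toEquiv
  obtain ⟨φ, hφ⟩ := exists_conjSetoid_map_comp ℤ ψ hfin
  have hker : ψ.ker = φ.ker := by
    rw [ker_eq_of_conjSetoid hφ]
    exact MonoidHom.ker_comp_of_injective _ _ <|
      generalLinearGroup_map_injective (algebraMap ℤ ℚ).injective_int
  refine ⟨(GeneralLinearGroup.map (Int.castRingHom (ZMod d))).comp φ, ?_⟩
  rw [hker] at hψ ⊢
  refine le_antisymm (fun x hx ↦ ?_) fun x (hx : φ x = 1) ↦ ?_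
  · obtain ⟨m, hm, -, hxm⟩ := Subgroup.exists_pow_mem_of_index_ne_zero hψ.index_ne_zero x
    refine eq_one_of_isOfFinOrder_of_map_intCast_eq_one hd ?_ hx
    exact isOfFinOrder_iff_pow_eq_one.2 ⟨m, hm, (map_pow φ x m).symm.trans hxm⟩
  · rw [MonoidHom.mem_ker, MonoidHom.comp_apply, hx, map_one]

end IntegralForm

section TopologicallyFinitelyGenerated

variable {G : Type*} [Group G] [TopologicalSpace G] [SeparatelyContinuousMul G]

theorem eq_of_eqOn_of_dense_closure {H : Type*} [Group H] {φ ψ : G →* H}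
    (hφ : IsOpen (φ.ker : Set G)) (hψ : IsOpen (ψ.ker : Set G)) {S : Set G}
    (hS : Dense (Subgroup.closure S : Set G)) (h : Set.EqOn φ ψ S) : φ = ψ := by
  have hker : φ.ker ⊓ ψ.ker ≤ φ.eqLocus ψ := fun x hx ↦ hx.1.trans hx.2.symm
  have hopen : IsOpen (φ.eqLocus ψ : Set G) := Subgroup.isOpen_mono hker (hφ.inter hψ)
  have hclosed : IsClosed (φ.eqLocus ψ : Set G) := Subgroup.isClosed_of_isOpen _ hopen
  have hle : Subgroup.closure S ≤ φ.eqLocus ψ := (Subgroup.closure_le _).2 h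
  ext x
  exact closure_minimal hle hclosed (hS x)

theorem finite_setOf_isOpen_ker
    (hfg : ∃ S : Finset G, Dense (Subgroup.closure (S : Set G) : Set G))
    (H : Type*) [Group H] [Finite H] : {φ : G →* H | IsOpen (φ.ker : Set G)}.Finite := by
  obtain ⟨S, hS⟩ := hfg
  refine Set.Finite.of_finite_image (f := fun φ (s : S) ↦ φ s) (Set.toFinite _) ?_
  intro φ hφ ψ hψ h
  exact eq_of_eqOn_of_dense_closure hφ hψ hS fun s hs ↦ congrFun h ⟨s, hs⟩

theorem exists_normal_finiteIndex_isOpen_le_ker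
    (hfg : ∃ S : Finset G, Dense (Subgroup.closure (S : Set G) : Set G))
    (ι : Type*) [Fintype ι] [DecidableEq ι] :
    ∃ N : Subgroup G, N.Normal ∧ N.FiniteIndex ∧ IsOpen (N : Set G) ∧
      ∀ ψ : G →* GL ι ℚ, IsOpen (ψ.ker : Set G) → ψ.ker.FiniteIndex → N ≤ ψ.ker := by
  let P := {φ : G →* GL ι (ZMod 3) | IsOpen (φ.ker : Set G)}
  have : Finite P := finite_setOf_isOpen_ker hfg (GL ι (ZMod 3))
  refine ⟨⨅ φ : P, φ.1.ker, Subgroup.normal_iInf_normal fun φ ↦ inferInstance,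
    Subgroup.finiteIndex_iInf fun φ ↦ inferInstance, ?_, fun ψ hopen hindex ↦ ?_⟩
  · rw [Subgroup.coe_iInf]
    exact isOpen_iInter_of_finite fun φ ↦ φ.2
  · obtain ⟨φ, hφ⟩ := exists_ker_eq_of_finiteIndex_ker (d := 3) (by norm_num) ψ
    rw [← hφ] at hopen ⊢
    exact iInf_le_of_le ⟨φ, hopen⟩ le_rfl

theorem finitely_many_rational_reps_of_profinite_general
    (hfg : ∃ S : Finset G, Dense (Subgroup.closure (S : Set G) : Set G))
    (ι : Type*) [Fintype ι] [DecidableEq ι] :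
    ∃ (r : ℕ) (ψs : Fin r → (G →* GL ι ℚ)),
      (∀ i, IsOpen ((ψs i).ker : Set G) ∧ (ψs i).ker.FiniteIndex) ∧
      ∀ ψ : G →* GL ι ℚ, IsOpen (ψ.ker : Set G) → ψ.ker.FiniteIndex →
        ∃ (i : Fin r) (g : GL ι ℚ), ∀ x : G, ψ x = g * ψs i x * g⁻¹ := by
  obtain ⟨N, hnormal, hindex, hopen, hN⟩ := exists_normal_finiteIndex_isOpen_le_ker hfg ι
  have : NeZero (Nat.card (G ⧸ N) : ℚ) := ⟨by exact_mod_cast Nat.card_pos.ne'⟩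
  have : Finite (Quotient (conjSetoid (G ⧸ N) (GL ι ℚ))) := finite_quotient_conjSetoid _ _ _
  let e := Finite.equivFin (Quotient (conjSetoid (G ⧸ N) (GL ι ℚ)))
  let ψs i := (e.symm i).out.comp (QuotientGroup.mk' N)
  refine ⟨_, ψs, fun i ↦ ?_, fun ψ hψ hψ' ↦ ?_⟩
  · have hle : N ≤ (ψs i).ker := fun x hx ↦ by
      rw [MonoidHom.mem_ker, MonoidHom.comp_apply, QuotientGroup.mk'_apply,
        (QuotientGroup.eq_one_iff x).2 hx, map_one]
    exact ⟨Subgroup.isOpen_mono hle hopen, Subgroup.finiteIndex_of_le hle⟩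
  · let φ := QuotientGroup.lift N ψ (hN ψ hψ hψ')
    obtain ⟨i, hi⟩ := e.symm.surjective (Quotient.mk _ φ)
    obtain ⟨g, hg⟩ := Quotient.exact (hi.symm.trans (e.symm i).out_eq.symm)
    exact ⟨i, g, fun x ↦ hg x⟩

end TopologicallyFinitelyGenerated

/-- A topologically finitely generated profinite group has, up to conjugation, only
finitely many homomorphisms to `GL_n(ℚ)` with open kernel. -/
theorem finitely_many_rational_reps_of_profinite
    (G : Type*) [Group G] [TopologicalSpace G] [IsTopologicalGroup G]
    [CompactSpace G] [T2Space G] [TotallyDisconnectedSpace G]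
    (hfg : ∃ S : Finset G, Dense ((Subgroup.closure (S : Set G) : Subgroup G) : Set G))
    (n : ℕ) :
    ∃ (r : ℕ) (ψs : Fin r → (G →* GL (Fin n) ℚ)),
      (∀ i, IsOpen ((ψs i).ker : Set G)) ∧
      ∀ ψ : G →* GL (Fin n) ℚ, IsOpen (ψ.ker : Set G) →
        ∃ (i : Fin r) (g : GL (Fin n) ℚ), ∀ x : G, ψ x = g * ψs i x * g⁻¹ := by
  obtain ⟨r, ψs, hψs, hconj⟩ := finitely_many_rational_reps_of_profinite_general hfg (Fin n)
  refine ⟨r, ψs, fun i ↦ (hψs i).1, fun ψ hψ ↦ hconj ψ hψ ?_⟩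
  have := Subgroup.quotient_finite_of_isOpen ψ.ker hψ
  exact Subgroup.finiteIndex_of_finite_quotient
end

section
/- Let p be a prime, G a topologically finitely generated pro-p group, and let k be either ℚ or a finite field with char(k) ≠ p. For every ν ∈ ℕ there are, up to equivalence, only finitely many irreducible representations of G with open kernel whose dimension is not divisible by p^ν: there exist finitely many pairs (n_1, ρ_1), …, (n_r, ρ_r), where each ρ_i : G → GL_{n_i}(k) is an irreducible homomorphism with open kernel, such that every irreducible homomorphism ρ : G → GL_n(k) with open kernel and p^ν ∤ n satisfies n = n_i and ρ = g ρ_i(·) g^{−1} for some i and some g ∈ GL_n(k). -/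
/-!
Let `ρ` be a faithful irreducible representation of a finite `p`-group `G` whose dimension is not
divisible by `p ^ ν`, and let `A` be a normal subgroup of `G` equal to its own centralizer; then
`|G| ≤ |A| * |A|!`. Over the non-closed field `k` the characters of `A` are the maximal ideals of
`k[A]`, and by Clifford theory `G` permutes transitively the corresponding isotypic components of
`ρ` restricted to `A`. If there is only one, then `A` embeds into the units of a field `K` whose
degree over `k` divides the dimension of `ρ`; so `A` is cyclic, generated by a root of unity, and is
bounded because the degrees of the `p`-power cyclotomic extensions of `k` have unbounded `p`-part.
Otherwise `ρ` is induced from a proper subgroup, whose representation on a single component has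
dimension not divisible by `p ^ (ν - 1)`, and induction on `ν` applies. Hence `|G|` is bounded in
terms of `p`, `k` and `ν`.

A topologically finitely generated group has only finitely many open normal subgroups of bounded
index, so all the representations in question factor through one finite `p`-group, and by Maschke's
theorem a finite group whose order is invertible in `k` has finitely many irreducible
representations.
-/

open Matrix

/-- A homomorphism `ρ : G →* GL_n(k)` is irreducible if `n ≥ 1` and the only
`ρ(G)`-invariant subspaces of `k^n` are `0` and `k^n`. -/
def MonoidHom.IsIrreducibleGL {G k : Type*} [Group G] [Field k] {n : ℕ}
    (ρ : G →* GL (Fin n) k) : Prop :=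
  1 ≤ n ∧ ∀ W : Submodule k (Fin n → k),
    (∀ g : G, W.map ((ρ g : Matrix (Fin n) (Fin n) k).mulVecLin) ≤ W) → W = ⊥ ∨ W = ⊤

open Polynomial
open scoped Nat Pointwise MonoidAlgebra commutatorElement

universe u v

section NormalSubgroups

variable {G : Type*} [Group G]

theorem exists_mem_center_ne_one [Group.IsNilpotent G] {N : Subgroup G} [N.Normal] (hN : N ≠ ⊥) :
    ∃ z ∈ N, z ∈ Subgroup.center G ∧ z ≠ 1 := by
  obtain ⟨x, hxN, hx⟩ := N.bot_or_exists_ne_one.resolve_left hN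
  obtain ⟨n, hn⟩ := Group.IsNilpotent.nilpotent G
  have hxn : x ∈ Subgroup.upperCentralSeries G n := hn ▸ Subgroup.mem_top x
  clear hn
  induction n generalizing x with
  | zero => exact absurd (Subgroup.mem_bot.mp (Subgroup.upperCentralSeries_zero G ▸ hxn)) hx
  | succ n ih =>
    by_cases hc : x ∈ Subgroup.center G
    · exact ⟨x, hxN, hc, hx⟩
    · obtain ⟨y, hy⟩ : ∃ y : G, ⁅x, y⁆ ≠ 1 := by
        simpa only [Subgroup.mem_center_iff, commutatorElement_eq_one_iff_mul_comm, not_forall,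
          ne_eq, @eq_comm _ (x * _)] using hc
      exact ih ⁅x, y⁆ (Subgroup.commutator_le_left N ⊤
        (Subgroup.commutator_mem_commutator hxN (Subgroup.mem_top y))) hy
        (Subgroup.mem_upperCentralSeries_succ_iff.mp hxn y)

theorem exists_normal_centralizer_eq_self [Group.IsNilpotent G] [Finite G] :
    ∃ A : Subgroup G, A.Normal ∧ Subgroup.centralizer (A : Set G) = A := by
  obtain ⟨A, ⟨hAn, hAc⟩, hmax⟩ := Set.Finite.exists_maximal
    (s := {A : Subgroup G | A.Normal ∧ A ≤ Subgroup.centralizer (A : Set G)}) (Set.toFinite _)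
    ⟨⊥, inferInstance, bot_le⟩
  refine ⟨A, hAn, le_antisymm (not_not.mp fun hcA ↦ ?_) hAc⟩
  let π := QuotientGroup.mk' A
  have : ((Subgroup.centralizer (A : Set G)).map π).Normal :=
    .map inferInstance π (QuotientGroup.mk'_surjective A)
  have hne : (Subgroup.centralizer (A : Set G)).map π ≠ ⊥ := by
    rwa [Ne, Subgroup.map_eq_bot_iff, QuotientGroup.ker_mk']
  obtain ⟨_, ⟨z, hzA, rfl⟩, hz, hz1⟩ := exists_mem_center_ne_one hne
  have hB : (A ⊔ Subgroup.zpowers z).Normal := by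
    have hπz : (Subgroup.zpowers (π z)).Normal := ⟨by
      rintro _ ⟨i, rfl⟩ g
      exact ⟨i, by
        rw [(Subgroup.mem_center_iff.mp (zpow_mem hz i) g), mul_inv_cancel_right]⟩⟩
    rw [← MonoidHom.map_zpowers] at hπz
    simpa only [Subgroup.comap_map_eq, π, QuotientGroup.ker_mk', sup_comm] using hπz.comap π
  have hzc : Subgroup.zpowers z ≤ Subgroup.centralizer (A : Set G) := by
    rwa [Subgroup.zpowers_le]
  have hBc : A ⊔ Subgroup.zpowers z ≤ Subgroup.centralizer (A ⊔ Subgroup.zpowers z : Subgroup G) :=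
    sup_le (Subgroup.le_centralizer_iff.mp (sup_le hAc hzc))
      (Subgroup.le_centralizer_iff.mp (sup_le (Subgroup.le_centralizer_iff.mp hzc)
        (Subgroup.le_centralizer_iff_isMulCommutative.mpr inferInstance)))
  refine hz1 ((QuotientGroup.eq_one_iff z).mpr (hmax ⟨hB, hBc⟩ le_sup_left ?_))
  exact Subgroup.mem_sup_right (Subgroup.mem_zpowers z)

theorem card_le_card_mul_factorial_of_centralizer_le (A : Subgroup G) [A.Normal] [Finite A]
    (hA : Subgroup.centralizer (A : Set G) ≤ A) :
    Nat.card G ≤ Nat.card A * (Nat.card A)! := by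
  have hker : (MulAut.conjNormal (H := A)).ker ≤ A := fun x hx ↦ hA fun a ha ↦ by
    have hxa := congrArg Subtype.val (DFunLike.congr_fun (MonoidHom.mem_ker.mp hx) (⟨a, ha⟩ : A))
    rw [MulAut.conjNormal_apply, MulAut.one_apply] at hxa
    exact (mul_inv_eq_iff_eq_mul.mp hxa).symm
  calc Nat.card G = Nat.card A * A.index := A.card_mul_index.symm
    _ ≤ Nat.card A * (MulAut.conjNormal (H := A)).ker.index := by
      gcongr
    _ = Nat.card A * Nat.card (MulAut.conjNormal (H := A)).range := by rw [Subgroup.index_ker]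
    _ ≤ Nat.card A * Nat.card (MulAut A) := by
      gcongr
      exact Subgroup.card_le_card_group _
    _ ≤ Nat.card A * Nat.card (Equiv.Perm A) := by
      gcongr
      exact Nat.card_le_card_of_injective (fun e : MulAut A ↦ (e : Equiv.Perm A))
        MulEquiv.toEquiv_injective
    _ = Nat.card A * (Nat.card A)! := by rw [Nat.card_perm]

theorem index_normalCore_le_factorial (H : Subgroup G) [H.FiniteIndex] :
    H.normalCore.index ≤ H.index ! := by
  rw [H.normalCore_eq_ker, Subgroup.index_ker]
  exact (Subgroup.card_le_card_group _).trans_eq Nat.card_perm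

end NormalSubgroups

section Cyclotomic

/-- The tower of `p`-power cyclotomic extensions of `k` is infinite, expressed through the
irreducible factors of the cyclotomic polynomials: every power of `p` divides the degree
`[k(ζ) : k]` for all primitive `p ^ m`-th roots of unity `ζ` with `m` large. This is what `ℚ` and
the finite fields of characteristic different from `p` have in common. -/
def HasInfiniteCyclotomicTower (p : ℕ) (k : Type*) [Field k] : Prop :=
  ∀ ν : ℕ, ∃ M : ℕ, ∀ m ≥ M, ∀ f : k[X], Irreducible f → f ∣ cyclotomic (p ^ m) k →
    p ^ ν ∣ f.natDegree

theorem dvd_pow_mul_pred_of_dvd_totient {p ν m d : ℕ} (hp : p.Prime) (hd : d ∣ φ (p ^ m))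
    (hpd : ¬ p ^ ν ∣ d) : d ∣ p ^ ν * (p - 1) := by
  rcases m.eq_zero_or_pos with rfl | hm
  · simp_all
  rw [Nat.totient_prime_pow hp hm] at hd
  have hd0 : d ≠ 0 := fun h ↦ hpd (h ▸ dvd_zero _)
  obtain ⟨e, d', hd', rfl⟩ := Nat.exists_eq_pow_mul_and_not_dvd hd0 p hp.ne_one
  have he : e < ν := lt_of_not_ge fun h ↦ hpd ((pow_dvd_pow p h).mul_right d')
  have hcop : d'.Coprime (p ^ (m - 1)) := ((hp.coprime_iff_not_dvd.mpr hd').symm).pow_right _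
  exact mul_dvd_mul (pow_dvd_pow p he.le) (hcop.dvd_of_dvd_mul_left ((dvd_mul_left _ _).trans hd))

theorem pow_dvd_orderOf_unitOfCoprime {p q ν m : ℕ} (hp : p.Prime) (hq : 1 < q)
    (hqp : q.Coprime (p ^ m)) (hm : q ^ (p ^ ν * (p - 1)) ≤ p ^ m) :
    p ^ ν ∣ orderOf (ZMod.unitOfCoprime q hqp) := by
  by_contra hν
  have : NeZero (p ^ m) := ⟨pow_ne_zero _ hp.ne_zero⟩
  have hord : orderOf (ZMod.unitOfCoprime q hqp) ∣ φ (p ^ m) := by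
    rw [← ZMod.card_units_eq_totient]
    exact orderOf_dvd_card
  have hpow : ZMod.unitOfCoprime q hqp ^ (p ^ ν * (p - 1)) = 1 :=
    orderOf_dvd_iff_pow_eq_one.mp (dvd_pow_mul_pred_of_dvd_totient hp hord hν)
  have hmod : 1 ≡ q ^ (p ^ ν * (p - 1)) [MOD p ^ m] := by
    rw [← ZMod.natCast_eq_natCast_iff, Nat.cast_pow, Nat.cast_one, eq_comm]
    simpa only [Units.val_pow_eq_pow_val, ZMod.coe_unitOfCoprime, Units.val_one] using
      congrArg Units.val hpow
  have hlt : 1 < q ^ (p ^ ν * (p - 1)) :=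
    Nat.one_lt_pow (mul_ne_zero (pow_ne_zero _ hp.ne_zero) (Nat.sub_ne_zero_of_lt hp.one_lt)) hq
  have hle := Nat.le_of_dvd (Nat.sub_pos_of_lt hlt) ((Nat.modEq_iff_dvd' hlt.le).mp hmod)
  omega

namespace HasInfiniteCyclotomicTower

variable {p : ℕ} {k : Type*} [Field k]

theorem of_irreducible_cyclotomic (hp : p.Prime) (h : ∀ m, Irreducible (cyclotomic (p ^ m) k)) :
    HasInfiniteCyclotomicTower p k := by
  refine fun ν ↦ ⟨ν + 1, fun m hm f hf hdvd ↦ ?_⟩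
  rw [natDegree_eq_of_degree_eq (degree_eq_degree_of_associated
      ((hf.dvd_irreducible_iff_associated (h m)).mp hdvd)), natDegree_cyclotomic,
    Nat.totient_prime_pow hp (by omega)]
  exact (pow_dvd_pow p (by omega)).mul_right _

theorem of_ringEquiv_rat (hp : p.Prime) (e : k ≃+* ℚ) : HasInfiniteCyclotomicTower p k :=
  of_irreducible_cyclotomic hp fun m ↦ by
    have hirr := (MulEquiv.irreducible_iff (mapEquiv e.symm)).mpr
      (cyclotomic.irreducible_rat (pow_pos hp.pos m))
    rwa [mapEquiv_apply, map_cyclotomic] at hirr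

theorem of_finite [Finite k] (hp : p.Prime) (hchar : ringChar k ≠ p) :
    HasInfiniteCyclotomicTower p k := by
  have := Fintype.ofFinite k
  obtain ⟨n, hprime, hcard⟩ := FiniteField.card k (ringChar k)
  have := Fact.mk hprime
  have hcop (m : ℕ) : (ringChar k).Coprime (p ^ m) :=
    ((Nat.coprime_primes hprime hp).mpr hchar).pow_right m
  refine fun ν ↦ ⟨(ringChar k ^ (n : ℕ)) ^ (p ^ ν * (p - 1)), fun m hm f hf hdvd ↦ ?_⟩
  rw [natDegree_of_dvd_cyclotomic_of_irreducible hcard (hcop m) hdvd hf]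
  exact pow_dvd_orderOf_unitOfCoprime hp (Nat.one_lt_pow n.ne_zero hprime.one_lt) _
    (hm.trans (Nat.lt_pow_self hp.one_lt).le)

theorem natCast_ne_zero (h : HasInfiniteCyclotomicTower p k) (hp : p.Prime) : (p : k) ≠ 0 := by
  intro hpk
  have := Fact.mk hp
  obtain ⟨M, hM⟩ := h 1
  have hroot : X - C 1 ∣ cyclotomic (p ^ (M + 1)) k :=
    dvd_iff_isRoot.mpr ((eval_one_cyclotomic_prime_pow M).trans hpk)
  have hp1 := hM (M + 1) M.le_succ _ (irreducible_X_sub_C 1) hroot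
  rw [natDegree_X_sub_C, pow_one] at hp1
  exact hp.one_lt.ne' (Nat.dvd_one.mp hp1)

end HasInfiniteCyclotomicTower

theorem minpoly_dvd_cyclotomic_of_isPrimitiveRoot {k K : Type*} [Field k] [Field K] [Algebra k K]
    {ζ : K} {n : ℕ} (hζ : IsPrimitiveRoot ζ n) (hn : 0 < n) : minpoly k ζ ∣ cyclotomic n k := by
  refine minpoly.dvd k ζ ?_
  rw [aeval_def, eval₂_eq_eval_map, map_cyclotomic]
  exact hζ.isRoot_cyclotomic hn

end Cyclotomic

section Irreducible

variable {G k V : Type*} [Field k] [AddCommGroup V] [Module k V]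

theorem isIrreducible_iff_forall_submodule [Monoid G] {ρ : Representation k G V} :
    ρ.IsIrreducible ↔ Nontrivial V ∧
      ∀ W : Submodule k V, (∀ g, ∀ v ∈ W, ρ g v ∈ W) → W = ⊥ ∨ W = ⊤ := by
  constructor
  · intro h
    refine ⟨?_, fun W hW ↦ ?_⟩
    · by_contra hV
      rw [not_nontrivial_iff_subsingleton] at hV
      exact bot_ne_top (Subrepresentation.toSubmodule_injective (Subsingleton.elim
        (⊥ : Subrepresentation ρ).toSubmodule (⊤ : Subrepresentation ρ).toSubmodule))
    · exact (h.eq_bot_or_eq_top ⟨W, hW⟩).imp (congrArg Subrepresentation.toSubmodule)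
        (congrArg Subrepresentation.toSubmodule)
  · rintro ⟨_, h⟩
    exact
      { exists_pair_ne := ⟨⊥, ⊤, fun h ↦ bot_ne_top (congrArg Subrepresentation.toSubmodule h)⟩
        eq_bot_or_eq_top := fun W ↦ (h W.toSubmodule fun g ↦ W.apply_mem_toSubmodule g).imp
          (fun hW ↦ Subrepresentation.toSubmodule_injective hW)
          (fun hW ↦ Subrepresentation.toSubmodule_injective hW) }

theorem nontrivial_of_isIrreducible [Monoid G] (ρ : Representation k G V) [ρ.IsIrreducible] :
    Nontrivial V :=
  (isIrreducible_iff_forall_submodule.mp ‹ρ.IsIrreducible›).1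

theorem isIrreducible_of_comp {H : Type*} [Monoid G] [Monoid H] {ρ : Representation k H V}
    {f : G →* H} (h : Representation.IsIrreducible (ρ.comp f)) : ρ.IsIrreducible := by
  rw [isIrreducible_iff_forall_submodule] at h ⊢
  exact ⟨h.1, fun W hW ↦ h.2 W fun g ↦ hW (f g)⟩

theorem iSup_eq_top_of_apply_mem [Monoid G] {ι : Type*} (ρ : Representation k G V) [ρ.IsIrreducible]
    {U : ι → Submodule k V} (a : G → ι → ι)
    (hU : ∀ g i, ∀ v ∈ U i, ρ g v ∈ U (a g i)) {i : ι} (hi : U i ≠ ⊥) : ⨆ i, U i = ⊤ := by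
  refine ((isIrreducible_iff_forall_submodule.mp ‹ρ.IsIrreducible›).2 _ fun g ↦ ?_).resolve_left
    fun h ↦ hi (eq_bot_iff.mpr (h ▸ le_iSup U i))
  suffices ⨆ i, U i ≤ (⨆ i, U i).comap (ρ g) from this
  exact iSup_le fun i v hv ↦ le_iSup U (a g i) (hU g i v hv)

end Irreducible

/-- The subspaces `U i` form a system of imprimitivity for `ρ`: they are independent and `ρ`
permutes them according to an action of the group on the index type. That they span is not part of
the definition, since it is automatic for irreducible `ρ` and non-zero `U i`. -/
structure IsImprimitivitySystem {G k V ι : Type*} [Group G] [Field k] [AddCommGroup V] [Module k V]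
    [MulAction G ι] (ρ : Representation k G V) (U : ι → Submodule k V) : Prop where
  iSupIndep : iSupIndep U
  apply_mem : ∀ (g : G) (i : ι) (v : V), v ∈ U i → ρ g v ∈ U (g • i)

namespace IsImprimitivitySystem

variable {G k V ι : Type*} [Group G] [Field k] [AddCommGroup V] [Module k V] [MulAction G ι]
  {ρ : Representation k G V} {U : ι → Submodule k V}

theorem iSup_eq_top (h : IsImprimitivitySystem ρ U) [ρ.IsIrreducible] {i : ι} (hi : U i ≠ ⊥) :
    ⨆ i, U i = ⊤ :=
  iSup_eq_top_of_apply_mem ρ (· • ·) h.apply_mem hi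

/-- The representation of the stabilizer of `i` on the block `U i`. -/
def blockRepresentation (h : IsImprimitivitySystem ρ U) (i : ι) :
    Representation k (MulAction.stabilizer G i) (U i) :=
  Subrepresentation.toRepresentation (ρ := ρ.comp (MulAction.stabilizer G i).subtype)
    ⟨U i, fun g v hv ↦ (congrArg U g.2).le (h.apply_mem g i v hv)⟩

theorem map_eq (h : IsImprimitivitySystem ρ U) (g : G) (i : ι) : (U i).map (ρ g) = U (g • i) := by
  refine le_antisymm (Submodule.map_le_iff_le_comap.mpr (h.apply_mem g i)) fun v hv ↦ ?_
  exact ⟨ρ g⁻¹ v, inv_smul_smul g i ▸ h.apply_mem g⁻¹ _ v hv, ρ.self_inv_apply g v⟩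

theorem finrank_eq_card_mul_finrank (h : IsImprimitivitySystem ρ U) [MulAction.IsPretransitive G ι]
    [Finite ι] [FiniteDimensional k V] (htop : ⨆ i, U i = ⊤) (i : ι) :
    Module.finrank k V = Nat.card ι * Module.finrank k (U i) := by
  classical
  have := Fintype.ofFinite ι
  have hfinrank (j : ι) : Module.finrank k (U j) = Module.finrank k (U i) := by
    obtain ⟨g, rfl⟩ := MulAction.exists_smul_eq G i j
    rw [← h.map_eq g i]
    exact (Submodule.equivMapOfInjective (ρ g) (ρ.apply_bijective g).injective
      (U i)).finrank_eq.symm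
  have hint := DirectSum.isInternal_submodule_of_iSupIndep_of_iSup_eq_top h.iSupIndep htop
  rw [← (LinearEquiv.ofBijective (DirectSum.coeLinearMap U) hint).finrank_eq,
    Module.finrank_directSum, Finset.sum_congr rfl fun j _ ↦ hfinrank j, Finset.sum_const,
    Finset.card_univ, smul_eq_mul, Nat.card_eq_fintype_card]

theorem isIrreducible_blockRepresentation (h : IsImprimitivitySystem ρ U) [ρ.IsIrreducible] {i : ι}
    (hi : U i ≠ ⊥) : (h.blockRepresentation i).IsIrreducible := by
  refine isIrreducible_iff_forall_submodule.mpr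
    ⟨Submodule.nontrivial_iff_ne_bot.mpr hi, fun W hW ↦ or_iff_not_imp_left.mpr fun hW0 ↦ ?_⟩
  -- The translates of `W` again span `V`, so they fill the blocks.
  let W' (j : ι) : Submodule k V := ⨆ g : {g : G // g • i = j}, (W.map (U i).subtype).map (ρ g)
  have hW'U : W' ≤ U := fun j ↦ iSup_le fun ⟨g, hg⟩ ↦
    (Submodule.map_mono (Submodule.map_subtype_le _ _)).trans_eq (by rw [h.map_eq, hg])
  have hW'W : W' i ≤ W.map (U i).subtype := by
    refine iSup_le ?_
    rintro ⟨g, hg⟩ _ ⟨_, ⟨w, hw, rfl⟩, rfl⟩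
    exact ⟨_, hW ⟨g, hg⟩ w hw, rfl⟩
  have hWW' : W.map (U i).subtype ≤ W' i := fun w hw ↦
    le_iSup (fun g : {g : G // g • i = i} ↦ (W.map (U i).subtype).map (ρ g)) ⟨1, one_smul G i⟩
      ⟨w, hw, by rw [map_one, Module.End.one_apply]⟩
  have hW'top : ⨆ j, W' j = ⊤ := by
    refine iSup_eq_top_of_apply_mem ρ (· • ·) (fun g j ↦ ?_) (i := i) fun hbot ↦ hW0 ?_
    · suffices W' j ≤ (W' (g • j)).comap (ρ g) from this
      refine iSup_le fun ⟨x, hx⟩ ↦ Submodule.map_le_iff_le_comap.mp ?_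
      rw [← Submodule.map_comp, ← Module.End.mul_eq_comp, ← map_mul]
      exact le_iSup (fun y : {y : G // y • i = g • j} ↦ (W.map (U i).subtype).map (ρ y))
        ⟨g * x, by rw [mul_smul, hx]⟩
    · exact Submodule.map_injective_of_injective (U i).injective_subtype
        ((eq_bot_iff.mpr (hbot ▸ hWW')).trans (Submodule.map_bot _).symm)
  have hWU : W.map (U i).subtype = U i := (hWW'.antisymm hW'W).trans
    (congrFun ((h.iSupIndep.le_iff_eq_of_iSup_eq_top hW'top).mp hW'U) i)
  exact Submodule.map_injective_of_injective (U i).injective_subtype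
    (hWU.trans (Submodule.map_subtype_top _).symm)

theorem normalCore_map_ker_le_ker (h : IsImprimitivitySystem ρ U) [MulAction.IsPretransitive G ι]
    (htop : ⨆ i, U i = ⊤) (i : ι) :
    ((h.blockRepresentation i).ker.map (MulAction.stabilizer G i).subtype).normalCore ≤ ρ.ker := by
  intro x hx
  suffices ⊤ ≤ LinearMap.eqLocus (ρ x) LinearMap.id from
    LinearMap.ext fun v ↦ this Submodule.mem_top
  rw [← htop]
  refine iSup_le fun j v hv ↦ ?_
  obtain ⟨g, rfl⟩ := MulAction.exists_smul_eq G i j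
  rw [← h.map_eq] at hv
  obtain ⟨u, hu, rfl⟩ := hv
  obtain ⟨y, hy, hyx⟩ := hx g⁻¹
  have hyu : ρ y u = u := congrArg Subtype.val (LinearMap.congr_fun hy ⟨u, hu⟩)
  have hxg : x * g = g * y := by
    simp only [Subgroup.subtype_apply] at hyx
    rw [hyx]; group
  rw [LinearMap.mem_eqLocus, LinearMap.id_apply, ← Module.End.mul_apply, ← map_mul, hxg, map_mul,
    Module.End.mul_apply, hyu]

theorem card_le_factorial (h : IsImprimitivitySystem ρ U) [MulAction.IsPretransitive G ι] [Finite G]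
    (hρ : Function.Injective ρ) (htop : ⨆ i, U i = ⊤) (i : ι) :
    Nat.card G ≤ (Nat.card ι * (h.blockRepresentation i).ker.index)! := by
  let K := (h.blockRepresentation i).ker.map (MulAction.stabilizer G i).subtype
  have hcore : K.normalCore = ⊥ := eq_bot_iff.mpr
    ((h.normalCore_map_ker_le_ker htop i).trans ((ρ.ker_eq_bot_iff).mpr hρ).le)
  calc Nat.card G = K.normalCore.index := by rw [hcore, Subgroup.index_bot]
    _ ≤ K.index ! := index_normalCore_le_factorial K
    _ = _ := by
      rw [Subgroup.index_map_subtype, MulAction.index_stabilizer_of_transitive, mul_comm]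

theorem not_pow_dvd_finrank_and_card_le [MulAction.IsPretransitive G ι] [Finite G] [Nontrivial ι]
    {p ν : ℕ} (hp : p.Prime) (hG : IsPGroup p G)
    (h : IsImprimitivitySystem ρ U) (htop : ⨆ i, U i = ⊤) (i : ι)
    (hV : ¬ p ^ (ν + 1) ∣ Module.finrank k V) :
    ¬ p ^ ν ∣ Module.finrank k (U i) ∧ Nat.card ι ≤ p ^ (ν + 1) := by
  have := Fact.mk hp
  have : FiniteDimensional k V := .of_finrank_pos (Nat.pos_of_ne_zero fun h ↦ hV (h ▸ dvd_zero _))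
  have := Finite.of_surjective _ (MulAction.surjective_smul G i)
  obtain ⟨t, ht⟩ := hG.index (MulAction.stabilizer G i)
  rw [MulAction.index_stabilizer_of_transitive] at ht
  rw [h.finrank_eq_card_mul_finrank htop i, ht] at hV
  have ht0 : t ≠ 0 := fun h0 ↦ Finite.one_lt_card.ne' (ht.trans (h0 ▸ pow_zero p))
  have htν : t ≤ ν + 1 := not_lt.mp fun hlt ↦ hV ((pow_dvd_pow p hlt.le).mul_right _)
  refine ⟨fun hd ↦ hV ?_, ht.trans_le (Nat.pow_le_pow_right hp.pos htν)⟩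
  rw [pow_succ']
  exact mul_dvd_mul (dvd_pow_self p ht0) hd

end IsImprimitivitySystem

section WeightSpace

variable {k R V : Type*} [Field k] [CommRing R] [Algebra k R] [AddCommGroup V] [Module k V]

/-- The vectors annihilated by the ideal `I` of a commutative algebra acting on `V`. For the group
algebra of a finite abelian group and a maximal ideal `I`, this is the isotypic component of the
simple module `R ⧸ I`, which replaces the eigenspaces of a character over a non-closed field. -/
def weightSpace (σ : R →ₐ[k] Module.End k V) (I : Ideal R) : Submodule k V :=
  ⨅ x ∈ I, LinearMap.ker (σ x)

theorem mem_weightSpace {σ : R →ₐ[k] Module.End k V} {I : Ideal R} {v : V} :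
    v ∈ weightSpace σ I ↔ ∀ x ∈ I, σ x v = 0 := by
  simp only [weightSpace, Submodule.mem_iInf, LinearMap.mem_ker]

theorem weightSpace_eq_top_iff {σ : R →ₐ[k] Module.End k V} {I : Ideal R} :
    weightSpace σ I = ⊤ ↔ ∀ x ∈ I, σ x = 0 := by
  simp only [weightSpace, iInf_eq_top, LinearMap.ker_eq_top]

theorem weightSpace_antitone (σ : R →ₐ[k] Module.End k V) : Antitone (weightSpace σ) :=
  fun _ _ hIJ ↦ biInf_mono hIJ

theorem disjoint_weightSpace (σ : R →ₐ[k] Module.End k V) {I J : Ideal R} (hIJ : I ⊔ J = ⊤) :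
    Disjoint (weightSpace σ I) (weightSpace σ J) := by
  refine Submodule.disjoint_def.mpr fun v hI hJ ↦ ?_
  obtain ⟨x, hx, y, hy, hxy⟩ := Submodule.mem_sup.mp (hIJ ▸ Submodule.mem_top (x := (1 : R)))
  calc v = σ (x + y) v := by rw [hxy, map_one, Module.End.one_apply]
    _ = 0 := by
      rw [map_add, LinearMap.add_apply, mem_weightSpace.mp hI x hx, mem_weightSpace.mp hJ y hy,
        add_zero]

theorem iSupIndep_weightSpace (σ : R →ₐ[k] Module.End k V) {ι : Type*} {P : ι → Ideal R}
    (hP : Pairwise fun i j ↦ P i ⊔ P j = ⊤) : iSupIndep fun i ↦ weightSpace σ (P i) := by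
  refine iSupIndep_iff_supIndep.mpr fun s t _ i _ hit ↦ ?_
  refine (disjoint_weightSpace σ (Ideal.sup_iInf_eq_top fun j hj ↦ hP ?_)).mono_right
    (Finset.sup_le fun j hj ↦ weightSpace_antitone σ (biInf_le P hj))
  exact fun hij ↦ hit (hij ▸ hj)

theorem exists_isPrime_weightSpace_ne_bot [IsNoetherianRing R] [Nontrivial V]
    (σ : R →ₐ[k] Module.End k V) : ∃ P : Ideal R, P.IsPrime ∧ weightSpace σ P ≠ ⊥ := by
  let _ : Module R V := Module.compHom V (σ : R →+* Module.End k V)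
  obtain ⟨P, hP⟩ := associatedPrimes.nonempty R V
  obtain ⟨hprime, v, rfl⟩ := isAssociatedPrime_iff.mp hP
  refine ⟨_, hprime, (Submodule.ne_bot_iff _).mpr ⟨v, mem_weightSpace.mpr fun x hx ↦ ?_, ?_⟩⟩
  · exact (Submodule.mem_bot R).mp (Submodule.mem_colon_singleton.mp hx)
  · rintro rfl
    exact hprime.ne_top (Ideal.eq_top_iff_one _ |>.mpr
      (Submodule.mem_colon_singleton.mpr ((Submodule.mem_bot R).mpr (smul_zero _))))

variable {G : Type*} [Group G] [MulSemiringAction G R]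

theorem isImprimitivitySystem_weightSpace [IsArtinianRing R] {ρ : Representation k G V}
    {σ : R →ₐ[k] Module.End k V} (hσ : ∀ g x v, ρ g (σ x v) = σ (g • x) (ρ g v))
    (P : Ideal R) [P.IsPrime] :
    IsImprimitivitySystem ρ fun Q : MulAction.orbit G P ↦ weightSpace σ (Q : Ideal R) where
  iSupIndep := by
    have hmax (Q : MulAction.orbit G P) : (Q : Ideal R).IsMaximal := by
      obtain ⟨_, g, rfl⟩ := Q
      exact IsArtinianRing.isMaximal_of_isPrime (g • P)
    exact iSupIndep_weightSpace σ fun Q Q' hQ ↦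
      (hmax Q).coprime_of_ne (hmax Q') (Subtype.coe_injective.ne hQ)
  apply_mem g Q v hv := mem_weightSpace.mpr fun x hx ↦ by
    have hxQ := mem_weightSpace.mp hv _ (Ideal.mem_pointwise_smul_iff_inv_smul_mem.mp hx)
    rw [← smul_inv_smul g x, ← hσ, hxQ, map_zero]

end WeightSpace

theorem finrank_dvd_finrank_of_algHom {k K V : Type*} [Field k] [Field K] [Algebra k K]
    [AddCommGroup V] [Module k V] (σ : K →ₐ[k] Module.End k V) :
    Module.finrank k K ∣ Module.finrank k V := by
  let _ : Module K V := Module.compHom V (σ : K →+* Module.End k V)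
  have : IsScalarTower k K V := ⟨fun c x v ↦ LinearMap.congr_fun (map_smul σ c x) v⟩
  exact ⟨_, (Module.finrank_mul_finrank k K V).symm⟩

section Clifford

variable {k G V : Type*} [Field k] [Group G] [AddCommGroup V] [Module k V]

/-- The action of `G` on the group algebra of a normal subgroup by conjugation. -/
noncomputable abbrev conjMulSemiringAction (k : Type*) [Field k] {G : Type*} [Group G]
    (A : Subgroup G) [A.Normal] : MulSemiringAction G k[A] :=
  MulSemiringAction.compHom k[A]
    ((MonoidAlgebra.domCongrAut (R := k) (A := k) (M := A)).comp MulAut.conjNormal)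

attribute [local instance] conjMulSemiringAction

theorem conj_smul_def (A : Subgroup G) [A.Normal] (g : G) (x : k[A]) :
    g • x = MonoidAlgebra.domCongr k k (MulAut.conjNormal g) x :=
  rfl

theorem conj_smul_single (A : Subgroup G) [A.Normal] (g : G) (a : A) (c : k) :
    g • MonoidAlgebra.single a c = MonoidAlgebra.single (MulAut.conjNormal g a) c := by
  rw [conj_smul_def, MonoidAlgebra.domCongr_single]

theorem apply_asAlgebraHom_comp_subtype (ρ : Representation k G V) (A : Subgroup G) [A.Normal]
    (g : G) (x : k[A]) (v : V) :
    ρ g (Representation.asAlgebraHom (ρ.comp A.subtype) x v) =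
      Representation.asAlgebraHom (ρ.comp A.subtype) (g • x) (ρ g v) := by
  induction x using MonoidAlgebra.induction_linear with
  | zero => simp only [smul_zero, map_zero, LinearMap.zero_apply]
  | add x y hx hy => simp only [smul_add, map_add, LinearMap.add_apply, hx, hy]
  | single a c =>
    simp only [conj_smul_single, Representation.asAlgebraHom_single, LinearMap.smul_apply, map_smul,
      MonoidHom.comp_apply, Subgroup.subtype_apply, MulAut.conjNormal_apply, map_mul,
      Module.End.mul_apply, ρ.inv_self_apply]

theorem card_lt_pow_of_injective {k K A : Type*} [Field k] [Field K] [Algebra k K]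
    [Group A] [Finite A] {p ν M : ℕ} (hp : p.Prime) (hA : IsPGroup p A)
    (hM : ∀ m ≥ M, ∀ f : k[X], Irreducible f → f ∣ cyclotomic (p ^ m) k → p ^ ν ∣ f.natDegree)
    {χ : A →* K} (hχ : Function.Injective χ) (hK : ¬ p ^ ν ∣ Module.finrank k K) :
    Nat.card A < p ^ M := by
  have := Fact.mk hp
  have : FiniteDimensional k K := .of_finrank_pos (Nat.pos_of_ne_zero fun h ↦ hK (h ▸ dvd_zero _))
  obtain ⟨m, hm⟩ := IsPGroup.iff_card.mp hA
  obtain ⟨a, ha⟩ := (isCyclic_of_injective_ringHom χ hχ).exists_zpow_surjective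
  have hroot : IsPrimitiveRoot (χ a) (p ^ m) := by
    rw [← hm, ← orderOf_eq_card_of_forall_mem_zpowers ha, ← orderOf_injective χ hχ a]
    exact .orderOf (χ a)
  have hint : IsIntegral k (χ a) := .of_finite k _
  rw [hm]
  refine Nat.pow_lt_pow_right hp.one_lt (lt_of_not_ge fun hMm ↦ hK ?_)
  have hdvd := minpoly_dvd_cyclotomic_of_isPrimitiveRoot (k := k) hroot (pow_pos hp.pos m)
  exact (hM m hMm _ (minpoly.irreducible hint) hdvd).trans (minpoly.degree_dvd hint)

open scoped IsMulCommutative in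
theorem card_lt_pow_of_weightSpace_eq_top {k A V : Type*} [Field k] [Group A] [IsMulCommutative A]
    [Finite A] [AddCommGroup V] [Module k V] {p ν M : ℕ} (hp : p.Prime) (hA : IsPGroup p A)
    (hM : ∀ m ≥ M, ∀ f : k[X], Irreducible f → f ∣ cyclotomic (p ^ m) k → p ^ ν ∣ f.natDegree)
    {σ : Representation k A V} (hσ : Function.Injective σ) (hV : ¬ p ^ ν ∣ Module.finrank k V)
    {P : Ideal k[A]} [P.IsMaximal] (hP : weightSpace σ.asAlgebraHom P = ⊤) :
    Nat.card A < p ^ M := by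
  let _ := Ideal.Quotient.field P
  let τ : k[A] ⧸ P →ₐ[k] Module.End k V :=
    Ideal.Quotient.liftₐ P σ.asAlgebraHom (weightSpace_eq_top_iff.mp hP)
  let χ : A →* k[A] ⧸ P := (Ideal.Quotient.mk P : k[A] →* k[A] ⧸ P).comp (MonoidAlgebra.of k A)
  have hτχ (a : A) : τ (χ a) = σ a := σ.asAlgebraHom_of a
  have hχ : Function.Injective χ := fun a b hab ↦ hσ (by rw [← hτχ, hab, hτχ])
  exact card_lt_pow_of_injective hp hA hM hχ
    fun hK ↦ hV (hK.trans (finrank_dvd_finrank_of_algHom τ))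

open scoped IsMulCommutative in
theorem exists_isImprimitivitySystem_orbit [Finite G] [Nontrivial V] (ρ : Representation k G V)
    (A : Subgroup G) [A.Normal] [IsMulCommutative A] :
    ∃ P : Ideal k[A], P.IsMaximal ∧
      weightSpace (Representation.asAlgebraHom (ρ.comp A.subtype)) P ≠ ⊥ ∧
      IsImprimitivitySystem ρ fun Q : MulAction.orbit G P ↦
        weightSpace (Representation.asAlgebraHom (ρ.comp A.subtype)) (Q : Ideal k[A]) := by
  have := IsArtinianRing.of_finite k k[A]
  obtain ⟨P, _, hP⟩ :=
    exists_isPrime_weightSpace_ne_bot (Representation.asAlgebraHom (ρ.comp A.subtype))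
  exact ⟨P, IsArtinianRing.isMaximal_of_isPrime P, hP,
    isImprimitivitySystem_weightSpace (apply_asAlgebraHom_comp_subtype ρ A) P⟩

theorem card_le_max_of_injective [Finite G] {p ν M B : ℕ} (hp : p.Prime) (hG : IsPGroup p G)
    (hM : ∀ m ≥ M, ∀ f : k[X], Irreducible f → f ∣ cyclotomic (p ^ m) k →
      p ^ (ν + 1) ∣ f.natDegree)
    (hB : ∀ (H : Subgroup G) (W : Submodule k V) (τ : Representation k H W), τ.IsIrreducible →
      ¬ p ^ ν ∣ Module.finrank k W → τ.ker.index ≤ B)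
    (ρ : Representation k G V) [ρ.IsIrreducible] (hρ : Function.Injective ρ)
    (hV : ¬ p ^ (ν + 1) ∣ Module.finrank k V) :
    Nat.card G ≤ max (p ^ M * (p ^ M)!) ((p ^ (ν + 1) * B)!) := by
  have := Fact.mk hp
  have := hG.isNilpotent
  have := nontrivial_of_isIrreducible ρ
  obtain ⟨A, _, hA⟩ := exists_normal_centralizer_eq_self (G := G)
  have : IsMulCommutative A := Subgroup.le_centralizer_iff_isMulCommutative.mp hA.ge
  obtain ⟨P, _, hP, h⟩ := exists_isImprimitivitySystem_orbit ρ A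
  let P₀ : MulAction.orbit G P := ⟨P, MulAction.mem_orbit_self P⟩
  have htop := h.iSup_eq_top (i := P₀) hP
  rcases subsingleton_or_nontrivial (MulAction.orbit G P) with _ | _
  · rw [ciSup_subsingleton P₀] at htop
    have hAM : Nat.card A ≤ p ^ M := (card_lt_pow_of_weightSpace_eq_top hp (hG.to_subgroup A) hM
      (hρ.comp A.subtype_injective) hV htop).le
    calc Nat.card G ≤ Nat.card A * (Nat.card A)! :=
          card_le_card_mul_factorial_of_centralizer_le A hA.le
      _ ≤ p ^ M * (p ^ M)! := by gcongr
      _ ≤ _ := le_max_left _ _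
  · obtain ⟨hU, hcard⟩ := h.not_pow_dvd_finrank_and_card_le hp hG htop P₀ hV
    have hker := hB _ _ _ (h.isIrreducible_blockRepresentation (i := P₀) hP) hU
    calc Nat.card G ≤ _ := h.card_le_factorial hρ htop P₀
      _ ≤ (p ^ (ν + 1) * B)! := by gcongr
      _ ≤ _ := le_max_right _ _

theorem exists_index_ker_le {k : Type*} [Field k] {p : ℕ} (hp : p.Prime)
    (hk : HasInfiniteCyclotomicTower p k) (ν : ℕ) :
    ∃ B : ℕ, ∀ (G : Type u) [Group G] (V : Type v) [AddCommGroup V] [Module k V]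
      (ρ : Representation k G V) [Finite (G ⧸ ρ.ker)],
      IsPGroup p (G ⧸ ρ.ker) → ρ.IsIrreducible → ¬ p ^ ν ∣ Module.finrank k V →
      ρ.ker.index ≤ B := by
  induction ν with
  | zero => exact ⟨0, fun G _ V _ _ ρ _ _ _ hV ↦ absurd (pow_zero p ▸ one_dvd _) hV⟩
  | succ ν ih =>
    obtain ⟨B, hB⟩ := ih
    obtain ⟨M, hM⟩ := hk (ν + 1)
    refine ⟨max (p ^ M * (p ^ M)!) ((p ^ (ν + 1) * B)!), fun G _ V _ _ ρ _ hG hρ hV ↦ ?_⟩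
    let ρ' : Representation k (G ⧸ ρ.ker) V := QuotientGroup.lift ρ.ker ρ le_rfl
    have : ρ'.IsIrreducible := isIrreducible_of_comp (f := QuotientGroup.mk' ρ.ker) hρ
    exact card_le_max_of_injective hp hG hM
      (fun H W τ ↦ hB H W τ ((hG.to_subgroup H).to_quotient τ.ker)) ρ'
      ((QuotientGroup.injective_lift_iff _ _ _).mpr rfl) hV

end Clifford

section OpenSubgroups

variable {G : Type*} [Group G] [TopologicalSpace G] [SeparatelyContinuousMul G]

theorem finite_hom_isOpen_ker {S : Set G} [Finite S]
    (hS : Dense (Subgroup.closure S : Set G)) (H : Type*) [Group H] [Finite H] :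
    Finite {f : G →* H // IsOpen (f.ker : Set G)} := by
  refine Finite.of_injective (fun f (s : S) ↦ f.1 s) fun f f' hff' ↦ Subtype.ext ?_
  have hopen : IsOpen (f.1.eqLocus f'.1 : Set G) :=
    Subgroup.isOpen_mono (H₁ := f.1.ker ⊓ f'.1.ker)
      (fun x hx ↦ (MonoidHom.mem_ker.mp hx.1).trans (MonoidHom.mem_ker.mp hx.2).symm)
      (f.2.inter f'.2)
  have hle : Subgroup.closure S ≤ f.1.eqLocus f'.1 :=
    (Subgroup.closure_le _).mpr fun s hs ↦ congrFun hff' ⟨s, hs⟩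
  have htop : (f.1.eqLocus f'.1 : Set G) = Set.univ := by
    rw [← (Subgroup.isClosed_of_isOpen _ hopen).closure_eq, (hS.mono hle).closure_eq]
  exact MonoidHom.ext fun x ↦ htop.ge (Set.mem_univ x)

theorem exists_hom_perm_ker_eq {G : Type*} [Group G] (N : Subgroup G) [N.Normal] [N.FiniteIndex] :
    ∃ f : G →* Equiv.Perm (Fin N.index), f.ker = N := by
  let e : G ⧸ N ≃ Fin N.index := Finite.equivFin (G ⧸ N)
  refine ⟨e.permCongrHom.toMonoidHom.comp (MulAction.toPermHom G (G ⧸ N)), ?_⟩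
  rw [← MonoidHom.comap_ker, (MonoidHom.ker_eq_bot_iff _).mpr e.permCongrHom.injective,
    MonoidHom.comap_bot, ← N.normalCore_eq_ker, N.normalCore_eq_self]

theorem exists_isOpen_normal_le {S : Set G} [Finite S] (hS : Dense (Subgroup.closure S : Set G))
    (B : ℕ) :
    ∃ N : Subgroup G, N.Normal ∧ IsOpen (N : Set G) ∧ ∀ M : Subgroup G, M.Normal → M.FiniteIndex →
      IsOpen (M : Set G) → M.index ≤ B → N ≤ M := by
  let T := Σ m : Fin (B + 1), {f : G →* Equiv.Perm (Fin m) // IsOpen (f.ker : Set G)}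
  have (m : ℕ) := finite_hom_isOpen_ker hS (Equiv.Perm (Fin m))
  refine ⟨⨅ t : T, t.2.1.ker, Subgroup.normal_iInf_normal fun t ↦ inferInstance, ?_,
    fun M _ _ hMopen hMB ↦ ?_⟩
  · rw [Subgroup.coe_iInf]
    exact isOpen_iInter_of_finite fun t : T ↦ t.2.2
  · obtain ⟨f, hf⟩ := exists_hom_perm_ker_eq M
    exact (iInf_le _ (⟨⟨M.index, Nat.lt_succ_of_le hMB⟩, f, hf.symm ▸ hMopen⟩ : T)).trans hf.le

end OpenSubgroups

section Representatives

theorem exists_fin_representatives {α X : Type*} [Finite X] (c : α → X) :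
    ∃ (r : ℕ) (x : Fin r → α), ∀ a, ∃ i, c (x i) = c a := by
  obtain ⟨r, ⟨e⟩⟩ := Finite.exists_equiv_fin (Set.range c)
  choose x hx using fun i ↦ (e.symm i).2
  exact ⟨r, x, fun a ↦ ⟨e ⟨c a, a, rfl⟩, by rw [hx, e.symm_apply_apply]⟩⟩

theorem exists_fin_representatives_of_isSimpleModule (R : Type*) [Ring R] [IsSemisimpleRing R]
    {T : Type*} (M : T → Type*) [∀ t, AddCommGroup (M t)] [∀ t, Module R (M t)]
    [∀ t, IsSimpleModule R (M t)] :
    ∃ (r : ℕ) (x : Fin r → T), ∀ t, ∃ i, Nonempty (M (x i) ≃ₗ[R] M t) := by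
  choose I hI using fun t ↦ IsSemisimpleRing.exists_linearEquiv_ideal_of_isSimpleModule R (M t)
  have (t : T) : IsSimpleModule R (I t) := IsSimpleModule.congr (hI t).some.symm
  let c (t : T) : isotypicComponents R R :=
    ⟨isotypicComponent R R (I t), I t, inferInstance, rfl⟩
  obtain ⟨r, x, hx⟩ := exists_fin_representatives c
  refine ⟨r, x, fun t ↦ ?_⟩
  obtain ⟨i, hi⟩ := hx t
  have hcomp : isotypicComponent R R (I (x i)) = isotypicComponent R R (I t) :=
    congrArg Subtype.val hi
  obtain ⟨e⟩ := isIsotypicOfType_submodule_iff.mp (IsIsotypicOfType.isotypicComponent R R (I t))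
    (I (x i)) (hcomp ▸ Submodule.le_isotypicComponent (I (x i)))
  exact ⟨i, ⟨(hI (x i)).some.trans (e.trans (hI t).some.symm)⟩⟩

variable {k G T : Type*} [Field k] [Group G] {V : T → Type*} [∀ t, AddCommGroup (V t)]
  [∀ t, Module k (V t)]

theorem nonempty_equiv_of_asModule {V W : Type*} [AddCommGroup V] [Module k V] [AddCommGroup W]
    [Module k W] {ρ : Representation k G V} {σ : Representation k G W}
    (e : ρ.asModule ≃ₗ[k[G]] σ.asModule) : Nonempty (ρ.Equiv σ) := by
  refine ⟨.mk (ρ.asModuleEquiv.symm.trans ((e.restrictScalars k).trans σ.asModuleEquiv))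
    fun g ↦ LinearMap.ext fun v ↦ ?_⟩
  rw [LinearMap.comp_apply, LinearEquiv.coe_coe, LinearEquiv.trans_apply,
    ρ.asModuleEquiv_symm_map_rho, LinearEquiv.trans_apply, LinearEquiv.restrictScalars_apply,
    map_smul, σ.asModuleEquiv_map_smul, σ.asAlgebraHom_of]
  rfl

theorem exists_fin_representatives_of_isIrreducible [NeZero (Nat.card G : k)]
    (ρ : ∀ t, Representation k G (V t)) (hρ : ∀ t, (ρ t).IsIrreducible) :
    ∃ (r : ℕ) (x : Fin r → T), ∀ t, ∃ i, Nonempty ((ρ (x i)).Equiv (ρ t)) := by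
  have : Finite G := Nat.finite_of_card_ne_zero (NeZero.of_neZero_natCast k).ne
  obtain ⟨r, x, hx⟩ := exists_fin_representatives_of_isSimpleModule k[G] fun t ↦ (ρ t).asModule
  exact ⟨r, x, fun t ↦ (hx t).imp fun i ⟨e⟩ ↦ nonempty_equiv_of_asModule e⟩

theorem exists_fin_representatives_of_le_ker (N : Subgroup G) [N.Normal]
    (hN : (N.index : k) ≠ 0) (ρ : ∀ t, Representation k G (V t)) (hρ : ∀ t, (ρ t).IsIrreducible)
    (hNρ : ∀ t, N ≤ (ρ t).ker) :
    ∃ (r : ℕ) (x : Fin r → T), ∀ t, ∃ i, Nonempty ((ρ (x i)).Equiv (ρ t)) := by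
  have : NeZero (Nat.card (G ⧸ N) : k) := ⟨hN⟩
  let ρ' (t : T) : Representation k (G ⧸ N) (V t) := QuotientGroup.lift N (ρ t) (hNρ t)
  obtain ⟨r, x, hx⟩ := exists_fin_representatives_of_isIrreducible ρ' fun t ↦
    isIrreducible_of_comp (f := QuotientGroup.mk' N) (hρ t)
  exact ⟨r, x, fun t ↦ (hx t).imp fun i ⟨e⟩ ↦
    ⟨.mk e.toLinearEquiv fun g ↦ e.toIntertwiningMap.isIntertwining' (g : G ⧸ N)⟩⟩

end Representatives

section GeneralLinear

variable {G k : Type*} [Group G] [Field k] {m n : ℕ}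

/-- The representation on column vectors given by a homomorphism to `GL_n(k)`. -/
def repOfGL (ρ : G →* GL (Fin n) k) : Representation k G (Fin n → k) :=
  (Matrix.toLinAlgEquiv' : Matrix (Fin n) (Fin n) k ≃ₐ[k] _).toMonoidHom.comp
    ((Units.coeHom _).comp ρ)

theorem repOfGL_apply (ρ : G →* GL (Fin n) k) (g : G) :
    repOfGL ρ g = Matrix.toLin' (ρ g : Matrix (Fin n) (Fin n) k) :=
  rfl

theorem ker_repOfGL (ρ : G →* GL (Fin n) k) : (repOfGL ρ).ker = ρ.ker := by
  ext g
  rw [MonoidHom.mem_ker, MonoidHom.mem_ker, repOfGL_apply, Module.End.one_eq_id,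
    ← Matrix.toLin'_one, Matrix.toLin'.injective.eq_iff, Units.val_eq_one]

theorem isIrreducible_repOfGL {ρ : G →* GL (Fin n) k} (hρ : ρ.IsIrreducibleGL) :
    (repOfGL ρ).IsIrreducible := by
  have : NeZero n := ⟨Nat.one_le_iff_ne_zero.mp hρ.1⟩
  exact isIrreducible_iff_forall_submodule.mpr
    ⟨inferInstance, fun W hW ↦ hρ.2 W fun g ↦ Submodule.map_le_iff_le_comap.mpr (hW g)⟩

theorem exists_matrix_of_equiv {ρ : G →* GL (Fin m) k} {σ : G →* GL (Fin n) k}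
    (e : (repOfGL ρ).Equiv (repOfGL σ)) :
    m = n ∧ ∃ (g : Matrix (Fin n) (Fin m) k) (g' : Matrix (Fin m) (Fin n) k),
      g * g' = 1 ∧ g' * g = 1 ∧
      ∀ x : G, (σ x : Matrix (Fin n) (Fin n) k) * g = g * (ρ x : Matrix (Fin m) (Fin m) k) := by
  let f : (Fin m → k) ≃ₗ[k] (Fin n → k) := e.toLinearEquiv
  refine ⟨by simpa only [Module.finrank_fin_fun] using f.finrank_eq,
    LinearMap.toMatrix' f.toLinearMap, LinearMap.toMatrix' f.symm.toLinearMap, ?_, ?_, fun x ↦ ?_⟩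
  · rw [← LinearMap.toMatrix'_comp, f.comp_symm, LinearMap.toMatrix'_id]
  · rw [← LinearMap.toMatrix'_comp, f.symm_comp, LinearMap.toMatrix'_id]
  · apply Matrix.toLin'.injective
    rw [Matrix.toLin'_mul, Matrix.toLin'_mul, Matrix.toLin'_toMatrix', ← repOfGL_apply,
      ← repOfGL_apply]
    exact (e.toIntertwiningMap.isIntertwining' x).symm

end GeneralLinear

theorem exists_isOpen_normal_le_ker {p : ℕ} (hp : p.Prime) {G : Type*} [Group G]
    [TopologicalSpace G] [SeparatelyContinuousMul G]
    (hpro : ∀ N : Subgroup G, N.Normal → IsOpen (N : Set G) → ∃ t : ℕ, N.index = p ^ t)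
    {S : Set G} [Finite S] (hS : Dense (Subgroup.closure S : Set G))
    {k : Type*} [Field k] (hk : HasInfiniteCyclotomicTower p k) (ν : ℕ) :
    ∃ N : Subgroup G, N.Normal ∧ IsOpen (N : Set G) ∧
      ∀ (n : ℕ) (ρ : G →* GL (Fin n) k), ρ.IsIrreducibleGL → IsOpen (ρ.ker : Set G) →
        ¬ p ^ ν ∣ n → N ≤ ρ.ker := by
  obtain ⟨B, hB⟩ := exists_index_ker_le hp hk ν
  obtain ⟨N, hN, hNopen, hle⟩ := exists_isOpen_normal_le hS B
  refine ⟨N, hN, hNopen, fun n ρ hirr hopen hn ↦ ?_⟩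
  obtain ⟨t, ht⟩ := hpro ρ.ker inferInstance hopen
  have : ρ.ker.FiniteIndex := ⟨ht ▸ pow_ne_zero t hp.ne_zero⟩
  refine hle ρ.ker inferInstance inferInstance hopen ?_
  rw [← ker_repOfGL] at ht this ⊢
  exact hB G (Fin n → k) (repOfGL ρ) (IsPGroup.of_card ht) (isIrreducible_repOfGL hirr)
    (by rwa [Module.finrank_fin_fun])

theorem finitely_many_irreducible_reps_of_pro_p_general
    (p : ℕ) (hp : p.Prime)
    (G : Type*) [Group G] [TopologicalSpace G] [SeparatelyContinuousMul G]
    (hpro : ∀ N : Subgroup G, N.Normal → IsOpen (N : Set G) → ∃ t : ℕ, N.index = p ^ t)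
    (hfg : ∃ S : Finset G, Dense ((Subgroup.closure (S : Set G) : Subgroup G) : Set G))
    (k : Type*) [Field k] (hk : HasInfiniteCyclotomicTower p k) (ν : ℕ) :
    ∃ (r : ℕ) (ns : Fin r → ℕ) (ρs : (i : Fin r) → (G →* GL (Fin (ns i)) k)),
      (∀ i, (ρs i).IsIrreducibleGL ∧ IsOpen ((ρs i).ker : Set G)) ∧
      ∀ (n : ℕ) (ρ : G →* GL (Fin n) k), ρ.IsIrreducibleGL →
        IsOpen (ρ.ker : Set G) → ¬ (p ^ ν ∣ n) →
        ∃ i : Fin r, ns i = n ∧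
          ∃ (g : Matrix (Fin n) (Fin (ns i)) k) (g' : Matrix (Fin (ns i)) (Fin n) k),
            g * g' = 1 ∧ g' * g = 1 ∧
            ∀ x : G, (ρ x : Matrix (Fin n) (Fin n) k) * g =
              g * (ρs i x : Matrix (Fin (ns i)) (Fin (ns i)) k) := by
  obtain ⟨S, hS⟩ := hfg
  obtain ⟨N, hN, hNopen, hker⟩ := exists_isOpen_normal_le_ker hp hpro hS hk ν
  obtain ⟨t, ht⟩ := hpro N hN hNopen
  have hindex : (N.index : k) ≠ 0 := by
    rw [ht, Nat.cast_pow]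
    exact pow_ne_zero t (hk.natCast_ne_zero hp)
  let T := Σ n : ℕ, {ρ : G →* GL (Fin n) k //
    ρ.IsIrreducibleGL ∧ IsOpen (ρ.ker : Set G) ∧ ¬ p ^ ν ∣ n}
  obtain ⟨r, x, hx⟩ := exists_fin_representatives_of_le_ker N hindex
    (fun t : T ↦ repOfGL t.2.1) (fun t ↦ isIrreducible_repOfGL t.2.2.1)
    fun ⟨n, ρ, hirr, hopen, hn⟩ ↦ (hker n ρ hirr hopen hn).trans (ker_repOfGL ρ).ge
  exact ⟨r, fun i ↦ (x i).1, fun i ↦ (x i).2.1, fun i ↦ ⟨(x i).2.2.1, (x i).2.2.2.1⟩,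
    fun n ρ hirr hopen hn ↦
      (hx ⟨n, ρ, hirr, hopen, hn⟩).imp fun i ⟨e⟩ ↦ exists_matrix_of_equiv e⟩

/-- Let `G` be a topologically finitely generated pro-`p` group and `k` either `ℚ` or a
finite field of characteristic `≠ p`.  For every `ν`, there are, up to equivalence, only
finitely many irreducible representations of `G` over `k` with open kernel whose
dimension is not divisible by `p^ν`. -/
theorem finitely_many_irreducible_reps_of_pro_p
    (p : ℕ) (hp : p.Prime)
    (G : Type*) [Group G] [TopologicalSpace G] [IsTopologicalGroup G]
    [CompactSpace G] [T2Space G] [TotallyDisconnectedSpace G]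
    (hpro : ∀ N : Subgroup G, N.Normal → IsOpen (N : Set G) → ∃ t : ℕ, N.index = p ^ t)
    (hfg : ∃ S : Finset G, Dense ((Subgroup.closure (S : Set G) : Subgroup G) : Set G))
    (k : Type*) [Field k]
    (hk : Nonempty (k ≃+* ℚ) ∨ (Finite k ∧ ringChar k ≠ p))
    (ν : ℕ) :
    ∃ (r : ℕ) (ns : Fin r → ℕ) (ρs : (i : Fin r) → (G →* GL (Fin (ns i)) k)),
      (∀ i, (ρs i).IsIrreducibleGL ∧ IsOpen ((ρs i).ker : Set G)) ∧
      ∀ (n : ℕ) (ρ : G →* GL (Fin n) k), ρ.IsIrreducibleGL →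
        IsOpen (ρ.ker : Set G) → ¬ (p ^ ν ∣ n) →
        ∃ i : Fin r, ns i = n ∧
          ∃ (g : Matrix (Fin n) (Fin (ns i)) k) (g' : Matrix (Fin (ns i)) (Fin n) k),
            g * g' = 1 ∧ g' * g = 1 ∧
            ∀ x : G, (ρ x : Matrix (Fin n) (Fin n) k) * g =
              g * (ρs i x : Matrix (Fin (ns i)) (Fin (ns i)) k) := by
  refine finitely_many_irreducible_reps_of_pro_p_general p hp G hpro hfg k ?_ ν
  rcases hk with ⟨⟨e⟩⟩ | ⟨_, hchar⟩
  · exact .of_ringEquiv_rat hp e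
  · exact .of_finite hp hchar
end

section
/- Let p be a prime, N ≥ 1, and let B ∈ M_N(ℚ_p) be a matrix all of whose entries have p-adic absolute value at most p^{−1} (i.e. all entries lie in pℤ_p). Then the series log(1+B) := Σ_{j=1}^∞ (−1)^{j−1} B^j / j converges in M_N(ℚ_p), and the sequence p^{−n}((1+B)^{p^n} − 1) converges to log(1+B) as n → ∞. -/
open Filter

/-!
Since `n⁻¹ * n.choose (j + 1) = (n - 1).choose j / (j + 1)`, the binomial theorem gives
`n⁻¹ • ((1 + b) ^ n - 1) = ∑ j, ((n - 1).choose j / (j + 1)) • b ^ (j + 1)`. As `n → 0` in `ℤ_[p]`,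
the continuous function `x ↦ Ring.choose x j` takes the coefficient of `b ^ (j + 1)` to
`Ring.choose (-1) j / (j + 1) = (-1) ^ j / (j + 1)`, its value in the logarithm series. All these
coefficients have norm at most `j + 1`, while `‖b ^ j‖` decays geometrically when `b` is
topologically nilpotent, so the limit may be taken term by term.
-/

open Topology Asymptotics

section TopologicallyNilpotent

variable {R : Type*} [SeminormedRing R]

lemma exists_norm_pow_le_of_norm_pow_le {b : R} {r : ℝ} {m : ℕ} (hr : 0 < r) (hm : m ≠ 0)
    (hbm : ‖b ^ m‖ ≤ r ^ m) : ∃ C, ∀ n, ‖b ^ n‖ ≤ C * r ^ n := by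
  refine ⟨∑ i ∈ Finset.range m, ‖b ^ i‖ / r ^ i, fun n => ?_⟩
  induction n using Nat.strong_induction_on with
  | _ n ih =>
    rcases lt_or_ge n m with hnm | hmn
    · rw [← div_le_iff₀ (pow_pos hr n)]
      exact Finset.single_le_sum (f := fun i => ‖b ^ i‖ / r ^ i) (fun i _ => by positivity)
        (Finset.mem_range.mpr hnm)
    · obtain ⟨k, rfl⟩ := Nat.exists_eq_add_of_le hmn
      calc ‖b ^ (m + k)‖ ≤ ‖b ^ m‖ * ‖b ^ k‖ := pow_add b m k ▸ norm_mul_le _ _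
        _ ≤ r ^ m * ((∑ i ∈ Finset.range m, ‖b ^ i‖ / r ^ i) * r ^ k) :=
            mul_le_mul hbm (ih k (by lia)) (norm_nonneg _) (by positivity)
        _ = _ := by ring

lemma exists_isBigO_pow_of_isTopologicallyNilpotent {b : R} (hb : IsTopologicallyNilpotent b) :
    ∃ r : ℝ, 0 < r ∧ r < 1 ∧ (fun n : ℕ => b ^ n) =O[atTop] fun n => r ^ n := by
  obtain ⟨m, hbm, hm⟩ : ∃ m, ‖b ^ m‖ < 1 / 2 ∧ m ≠ 0 :=
    ((hb.norm.eventually_lt_const (by norm_num)).and (eventually_ne_atTop 0)).exists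
  set r : ℝ := (1 / 2) ^ (m⁻¹ : ℝ)
  have hr : 0 < r := by positivity
  have hrm : r ^ m = 1 / 2 := Real.rpow_inv_natCast_pow (by norm_num) hm
  obtain ⟨C, hC⟩ := exists_norm_pow_le_of_norm_pow_le hr hm (hbm.le.trans_eq hrm.symm)
  refine ⟨r, hr, Real.rpow_lt_one (by norm_num) (by norm_num) (by positivity), ?_⟩
  exact .of_bound C (.of_forall fun n => by simpa [abs_of_pos hr] using hC n)

lemma summable_mul_norm_pow_of_isTopologicallyNilpotent {b : R} (hb : IsTopologicallyNilpotent b) :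
    Summable fun n : ℕ => n * ‖b ^ n‖ := by
  obtain ⟨r, hr, hr1, hbr⟩ := exists_isBigO_pow_of_isTopologicallyNilpotent hb
  have hgeom : Summable fun n : ℕ => (n : ℝ) * r ^ n := by
    simpa using summable_pow_mul_geometric_of_norm_lt_one 1 (by rwa [Real.norm_of_nonneg hr.le])
  exact summable_of_isBigO_nat hgeom ((isBigO_refl _ _).mul hbr.norm_left)

end TopologicallyNilpotent

section Matrix

variable {R ι : Type*} [SeminormedRing R] [NormOneClass R] [IsUltrametricDist R] [Fintype ι]
  [DecidableEq ι] {B : Matrix ι ι R} {c : ℝ}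

lemma norm_matrix_pow_apply_le (hB : ∀ i j, ‖B i j‖ ≤ c) (k : ℕ) (i j : ι) :
    ‖(B ^ k) i j‖ ≤ c ^ k := by
  have hc : 0 ≤ c := (norm_nonneg _).trans (hB i j)
  induction k generalizing i j with
  | zero => rcases eq_or_ne i j with rfl | hij <;> simp [*]
  | succ k ih =>
    rw [pow_succ, Matrix.mul_apply, pow_succ]
    refine IsUltrametricDist.norm_sum_le_of_forall_le_of_nonneg (by positivity) fun l _ => ?_
    exact (norm_mul_le _ _).trans (mul_le_mul (ih i l) (hB l j) (norm_nonneg _) (by positivity))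

lemma isTopologicallyNilpotent_of_norm_apply_le (hc : c < 1) (hB : ∀ i j, ‖B i j‖ ≤ c) :
    IsTopologicallyNilpotent B := by
  refine tendsto_pi_nhds.mpr fun i => tendsto_pi_nhds.mpr fun j => ?_
  have hc0 : 0 ≤ c := (norm_nonneg _).trans (hB i j)
  exact squeeze_zero_norm (norm_matrix_pow_apply_le hB · i j)
    (tendsto_pow_atTop_nhds_zero_of_lt_one hc0 hc)

end Matrix

section Binomial

lemma inv_mul_cast_choose_succ {K : Type*} [Field K] [CharZero K] {n : ℕ} (hn : n ≠ 0) (j : ℕ) :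
    (n : K)⁻¹ * n.choose (j + 1) = (n - 1).choose j / ((j + 1 : ℕ) : K) := by
  obtain ⟨n, rfl⟩ := Nat.exists_eq_succ_of_ne_zero hn
  rw [Nat.succ_sub_one, inv_mul_eq_div, div_eq_div_iff (mod_cast hn) (mod_cast j.succ_ne_zero),
    mul_comm (n.choose j : K)]
  exact_mod_cast (Nat.add_one_mul_choose_eq n j).symm

lemma one_add_pow_sub_one {R : Type*} [Ring R] (b : R) (n : ℕ) :
    (1 + b) ^ n - 1 = ∑ j ∈ Finset.range n, n.choose (j + 1) • b ^ (j + 1) := by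
  rw [add_comm, (Commute.one_right b).add_pow, Finset.sum_range_succ']
  simp [nsmul_eq_mul, Nat.cast_comm]

lemma inv_smul_one_add_pow_sub_one (K : Type*) {A : Type*} [Field K] [CharZero K] [Ring A]
    [Algebra K A] (b : A) {n : ℕ} (hn : n ≠ 0) :
    (n : K)⁻¹ • ((1 + b) ^ n - 1) =
      ∑ j ∈ Finset.range n, ((n - 1).choose j / ((j + 1 : ℕ) : K)) • b ^ (j + 1) := by
  simp_rw [one_add_pow_sub_one, Finset.smul_sum, ← inv_mul_cast_choose_succ hn, mul_smul,
    Nat.cast_smul_eq_nsmul]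

end Binomial

section Padic

variable {p : ℕ} [Fact p.Prime]

lemma norm_inv_natCast_padic_le (n : ℕ) : ‖(n : ℚ_[p])⁻¹‖ ≤ n := by
  rcases eq_or_ne n 0 with rfl | hn
  · simp
  · rw [norm_inv, Padic.norm_eq_zpow_neg_valuation (mod_cast hn), Padic.valuation_natCast,
      zpow_neg, inv_inv, zpow_natCast]
    exact_mod_cast Nat.le_of_dvd (Nat.pos_of_ne_zero hn) pow_padicValNat_dvd

lemma norm_div_natCast_smul_le {E : Type*} [SeminormedAddCommGroup E] [NormedSpace ℚ_[p] E]
    {c : ℚ_[p]} (hc : ‖c‖ ≤ 1) (n : ℕ) (x : E) : ‖(c / n) • x‖ ≤ n * ‖x‖ := by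
  rw [norm_smul, div_eq_mul_inv, norm_mul]
  gcongr
  exact (mul_le_of_le_one_left (norm_nonneg _) hc).trans (norm_inv_natCast_padic_le n)

lemma ring_choose_neg_one {R : Type*} [Ring R] [BinomialRing R] (j : ℕ) :
    Ring.choose (-1 : R) j = (-1) ^ j := by
  simp [Ring.choose_neg, Ring.choose_natCast, Int.negOnePow_def, Units.smul_def]

lemma tendsto_choose_pred_padic {ι : Type*} {l : Filter ι} {n : ι → ℕ} (hn0 : ∀ᶠ i in l, n i ≠ 0)
    (hn : Tendsto (fun i => (n i : ℤ_[p])) l (𝓝 0)) (j : ℕ) :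
    Tendsto (fun i => ((n i - 1).choose j : ℚ_[p])) l (𝓝 ((-1) ^ j)) := by
  have hpred : Tendsto (fun i => ((n i - 1 : ℕ) : ℤ_[p])) l (𝓝 (-1)) := by
    rw [← zero_sub]
    refine (hn.sub_const 1).congr' ?_
    filter_upwards [hn0] with i hi using (Nat.cast_pred (Nat.pos_of_ne_zero hi)).symm
  have hchoose := ((PadicInt.continuous_choose j).tendsto _).comp hpred
  rw [ring_choose_neg_one] at hchoose
  have hcoe := (continuous_subtype_val.tendsto _).comp hchoose
  simpa [Ring.choose_natCast, Function.comp_def] using! hcoe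

end Padic

section Logarithm

variable (p : ℕ) [Fact p.Prime]

/-- The `p`-adic logarithm `log (1 + b) = ∑_{j ≥ 1} (-1)^(j-1) b^j / j`, as a function of `b`, in a
topological `ℚ_[p]`-algebra. The sum is reindexed from `j = 0`; by the convention for `∑'`, it is
`0` if the family of its terms is not summable. -/
noncomputable def padicLogOneAdd {A : Type*} [Ring A] [TopologicalSpace A] [Algebra ℚ_[p] A]
    (b : A) : A :=
  ∑' j : ℕ, ((-1 : ℚ_[p]) ^ j / ((j + 1 : ℕ) : ℚ_[p])) • b ^ (j + 1)

variable {A : Type*} [NormedRing A] [NormedAlgebra ℚ_[p] A] [CompleteSpace A] {b : A}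

lemma hasSum_padicLogOneAdd (hb : IsTopologicallyNilpotent b) :
    HasSum (fun j : ℕ => ((-1 : ℚ_[p]) ^ j / ((j + 1 : ℕ) : ℚ_[p])) • b ^ (j + 1))
      (padicLogOneAdd p b) :=
  have hsum := (summable_nat_add_iff 1).mpr (summable_mul_norm_pow_of_isTopologicallyNilpotent hb)
  (Summable.of_norm_bounded hsum fun j => norm_div_natCast_smul_le (by simp) (j + 1) _).hasSum

lemma tendsto_inv_smul_one_add_pow_sub_one (hb : IsTopologicallyNilpotent b) {ι : Type*}
    {l : Filter ι} {n : ι → ℕ} (hn0 : ∀ᶠ i in l, n i ≠ 0)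
    (hn : Tendsto (fun i => (n i : ℤ_[p])) l (𝓝 0)) :
    Tendsto (fun i => (n i : ℚ_[p])⁻¹ • ((1 + b) ^ n i - 1)) l (𝓝 (padicLogOneAdd p b)) := by
  have hsum := (summable_nat_add_iff 1).mpr (summable_mul_norm_pow_of_isTopologicallyNilpotent hb)
  have hlim := tendsto_tsum_of_dominated_convergence hsum
    (fun j => ((tendsto_choose_pred_padic hn0 hn j).div_const _).smul_const (b ^ (j + 1)))
    (.of_forall fun i j => norm_div_natCast_smul_le
      (mod_cast Padic.norm_int_le_one ((n i - 1).choose j : ℤ)) (j + 1) _)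
  refine hlim.congr' ?_
  filter_upwards [hn0] with i hi
  rw [inv_smul_one_add_pow_sub_one ℚ_[p] b hi]
  refine tsum_eq_sum fun j hj => ?_
  have hlt : n i - 1 < j := by
    rw [Finset.mem_range] at hj
    lia
  simp [Nat.choose_eq_zero_of_lt hlt]

theorem padic_matrix_log_limit_general (hb : IsTopologicallyNilpotent b) :
    Tendsto (fun m : ℕ => ∑ j ∈ Finset.Icc 1 m, ((-1 : ℚ_[p]) ^ (j - 1) / (j : ℚ_[p])) • b ^ j)
        atTop (𝓝 (padicLogOneAdd p b)) ∧
      Tendsto (fun n => ((p : ℚ_[p]) ^ n)⁻¹ • ((1 + b) ^ (p ^ n) - 1)) atTop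
        (𝓝 (padicLogOneAdd p b)) := by
  constructor
  · refine (hasSum_padicLogOneAdd p hb).tendsto_sum_nat.congr fun m => ?_
    rw [← Finset.Ico_add_one_right_eq_Icc, Finset.sum_Ico_eq_sum_range]
    simp [add_comm]
  · have hp : Tendsto (fun n : ℕ => ((p ^ n : ℕ) : ℤ_[p])) atTop (𝓝 0) := by
      simpa using tendsto_pow_atTop_nhds_zero_of_norm_lt_one
        (PadicInt.mem_nonunits.mp PadicInt.p_nonunit)
    simpa using tendsto_inv_smul_one_add_pow_sub_one p hb
      (.of_forall fun n => pow_ne_zero n (Fact.out : p.Prime).ne_zero) hp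

end Logarithm

/-- For a matrix `B` over `ℚ_p` with entries in `pℤ_p`, the series
`log(1+B) = Σ_{j≥1} (-1)^{j-1} B^j / j` converges, and
`p^{-n}((1+B)^{p^n} - 1)` converges to `log(1+B)` as `n → ∞`. -/
theorem padic_matrix_log_limit (p : ℕ) [Fact p.Prime] (N : ℕ) (hN : 1 ≤ N)
    (B : Matrix (Fin N) (Fin N) ℚ_[p])
    (hB : ∀ i j, ‖B i j‖ ≤ (p : ℝ)⁻¹) :
    ∃ L : Matrix (Fin N) (Fin N) ℚ_[p],
      Tendsto (fun m : ℕ => ∑ j ∈ Finset.Icc 1 m,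
          ((-1 : ℚ_[p]) ^ (j - 1) / (j : ℚ_[p])) • B ^ j) atTop (nhds L) ∧
      Tendsto (fun n => ((p : ℚ_[p]) ^ n)⁻¹ • ((1 + B) ^ (p ^ n) - 1)) atTop (nhds L) := by
  open scoped Matrix.Norms.Operator in
  have hp : (p : ℝ)⁻¹ < 1 := inv_lt_one_of_one_lt₀ (mod_cast (Fact.out : p.Prime).one_lt)
  have hcomplete : CompleteSpace (Matrix (Fin N) (Fin N) ℚ_[p]) := inferInstance
  have hBnil : IsTopologicallyNilpotent B := isTopologicallyNilpotent_of_norm_apply_le hp hB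
  -- Completeness is passed by hand: instance search does not identify the uniformity of the
  -- operator norm with the entrywise one, although the two are definitionally equal.
  exact ⟨_, @padic_matrix_log_limit_general p _ _ _ _ hcomplete B hBnil⟩
end

section
/- Let p be a prime, N ≥ 1, and A ∈ M_N(ℤ_p) with A ≡ 1 (mod p), i.e. all entries of A − 1 lie in pℤ_p. Define log(A) = Σ_{j=1}^∞ (−1)^{j−1} (A−1)^j / j ∈ M_N(ℚ_p) (a convergent series). Assume det(A − 1) ≠ 0 if p is odd, respectively det(A² − 1) ≠ 0 if p = 2. Then det(log(A)) ≠ 0. -/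
open Filter

/-!
Since `(m - 1).choose k → (-1) ^ k` as `m → 0` `p`-adically, the logarithm of `A` is the limit of
`m⁻¹ • (A ^ m - 1)` along such `m`. If `‖A - 1‖ < 1 / 2` elementwise, the binomial theorem gives
`A ^ m - 1 = m • (A - 1) * (1 - E)` with `‖E‖ < 1`, because its coefficients
`(m - 1).choose k / (k + 1)` have norm at most `k + 1 ≤ 2 ^ k`. As `‖det (1 - E)‖ = 1`, the
determinants of `m⁻¹ • (A ^ m - 1)` all have the same norm as `det (A - 1)`, and hence so does
their limit `det (log A)`. When `p = 2` only `A ^ 2` need be this close to `1`, and the same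
argument is run along even `m`.
-/

section

open scoped Topology

section UltrametricSums

theorem norm_sum_range_sub_sum_range_le_of_ultrametric {G : Type*} [SeminormedAddCommGroup G]
    [IsUltrametricDist G] {f : ℕ → G} {M N : ℕ} {C : ℝ} (hC : 0 ≤ C)
    (hf : ∀ k ≥ M, ‖f k‖ ≤ C) (hN : ∀ k ≥ N, f k = 0) :
    ‖∑ k ∈ Finset.range N, f k - ∑ k ∈ Finset.range M, f k‖ ≤ C := by
  rcases le_total M N with hMN | hNM
  · rw [← Finset.sum_Ico_eq_sub f hMN]
    exact IsUltrametricDist.norm_sum_le_of_forall_le_of_nonneg hC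
      fun k hk => hf k (Finset.mem_Ico.1 hk).1
  · rwa [Finset.eventually_constant_sum hN hNM, sub_self, norm_zero]

theorem tendsto_sum_range_of_dominated_of_ultrametric {ι G : Type*} [SeminormedAddCommGroup G]
    [IsUltrametricDist G] {l : Filter ι} {f : ι → ℕ → G} {N : ι → ℕ} {g : ℕ → G} {s : G}
    {bound : ℕ → ℝ} (hbound : Tendsto bound atTop (𝓝 0)) (hf : ∀ i k, ‖f i k‖ ≤ bound k)
    (hN : ∀ i, ∀ k ≥ N i, f i k = 0) (hfg : ∀ k, Tendsto (f · k) l (𝓝 (g k)))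
    (hg : Tendsto (fun M => ∑ k ∈ Finset.range M, g k) atTop (𝓝 s)) :
    Tendsto (fun i => ∑ k ∈ Finset.range (N i), f i k) l (𝓝 s) := by
  have huniform : TendstoUniformly (fun M i => ∑ k ∈ Finset.range M, f i k)
      (fun i => ∑ k ∈ Finset.range (N i), f i k) atTop := by
    rw [Metric.tendstoUniformly_iff]
    intro ε hε
    obtain ⟨M₀, hM₀⟩ := eventually_atTop.1 (hbound.eventually_le_const (half_pos hε))
    filter_upwards [eventually_ge_atTop M₀] with M hM i
    rw [dist_eq_norm]
    exact (norm_sum_range_sub_sum_range_le_of_ultrametric (half_pos hε).le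
      (fun k hk => (hf i k).trans (hM₀ k (hM.trans hk))) (hN i)).trans_lt (half_lt_self hε)
  exact huniform.tendsto_of_eventually_tendsto
    (Eventually.of_forall fun M => tendsto_finsetSum _ fun k _ => hfg k) hg

end UltrametricSums

section BinomialExpansion

theorem tendsto_natCast_choose_of_tendsto_succ {ι K : Type*} [Field K] [CharZero K]
    [TopologicalSpace K] [IsTopologicalRing K] {l : Filter ι} {m : ι → ℕ}
    (hm : Tendsto (fun i => ((m i + 1 : ℕ) : K)) l (𝓝 0)) (k : ℕ) :
    Tendsto (fun i => ((m i).choose k : K)) l (𝓝 ((-1) ^ k)) := by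
  induction k with
  | zero => simpa using tendsto_const_nhds
  | succ k ih =>
    have pascal (i : ι) : ((m i).choose (k + 1) : K) =
        ((m i + 1 : ℕ) : K) * (m i).choose k / ((k + 1 : ℕ) : K) - (m i).choose k := by
      rw [eq_sub_iff_add_eq', eq_div_iff (Nat.cast_ne_zero.2 k.succ_ne_zero)]
      exact_mod_cast ((m i).add_one_mul_choose_eq k).symm
    simpa only [pascal, zero_mul, zero_div, zero_sub, pow_succ, mul_neg_one] using
      ((hm.mul ih).div_const ((k + 1 : ℕ) : K)).sub ih

theorem pow_succ_sub_one_eq_natCast_smul_sum {K R : Type*} [Field K] [CharZero K] [Ring R]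
    [Algebra K R] (a : R) (m : ℕ) :
    a ^ (m + 1) - 1 = ((m + 1 : ℕ) : K) •
      ∑ k ∈ Finset.range (m + 1), ((m.choose k : K) / ((k + 1 : ℕ) : K)) • (a - 1) ^ (k + 1) := by
  have hcoeff (k : ℕ) : ((m + 1 : ℕ) : K) * ((m.choose k : K) / ((k + 1 : ℕ) : K)) =
      (m + 1).choose (k + 1) := by
    rw [mul_div_assoc', div_eq_iff (Nat.cast_ne_zero.2 k.succ_ne_zero)]
    exact_mod_cast m.add_one_mul_choose_eq k
  nth_rw 1 [← sub_add_cancel a 1]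
  rw [(Commute.one_right (a - 1)).add_pow, Finset.sum_range_succ', Finset.smul_sum]
  simp only [one_pow, mul_one, pow_zero, Nat.choose_zero_right, Nat.cast_one,
    add_sub_cancel_right, smul_smul, hcoeff, Nat.cast_smul_eq_nsmul, nsmul_eq_mul']

end BinomialExpansion

section Logarithm

theorem norm_sq_sub_one_le_max (K : Type*) {R : Type*} [NormedField K] [NormedRing R]
    [NormedAlgebra K R] [IsUltrametricDist R] (a : R) :
    ‖a ^ 2 - 1‖ ≤ max (‖a - 1‖ ^ 2) (‖(2 : K)‖ * ‖a - 1‖) := by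
  have hsq : a ^ 2 - 1 = (a - 1) ^ 2 + (2 : K) • (a - 1) := by
    rw [two_smul]; noncomm_ring
  rw [hsq, ← norm_smul]
  exact (IsUltrametricDist.norm_add_le_max _ _).trans
    (max_le_max_right _ (norm_pow_le' _ two_pos))

/-- `HasLog K a s` says that `s` is the logarithm of `a`: the partial sums of the series
`∑_{j ≥ 1} (-1) ^ (j - 1) / j • (a - 1) ^ j`, with coefficients in `K`, tend to `s`. A predicate
rather than a function, so that no value is assigned where the series diverges. -/
def HasLog (K : Type*) {R : Type*} [Field K] [Ring R] [Algebra K R] [TopologicalSpace R]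
    (a s : R) : Prop :=
  Tendsto (fun m : ℕ => ∑ j ∈ Finset.Icc 1 m, ((-1 : K) ^ (j - 1) / (j : K)) • (a - 1) ^ j)
    atTop (𝓝 s)

variable (p : ℕ) [Fact p.Prime] {K : Type*} [NormedField K] [NormedAlgebra ℚ_[p] K]

include p in
theorem charZero_of_normedAlgebra_padic : CharZero K :=
  charZero_of_injective_algebraMap (algebraMap ℚ_[p] K).injective

theorem norm_natCast_prime : ‖(p : K)‖ = (p : ℝ)⁻¹ := by
  rw [← map_natCast (algebraMap ℚ_[p] K), norm_algebraMap', Padic.norm_p]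

include p in
theorem inv_natCast_le_norm_natCast (k : ℕ) : (k : ℝ)⁻¹ ≤ ‖(k : K)‖ := by
  rcases eq_or_ne k 0 with rfl | hk
  · simp
  rw [← map_natCast (algebraMap ℚ_[p] K), norm_algebraMap',
    Padic.norm_eq_zpow_neg_valuation (Nat.cast_ne_zero.2 hk), Padic.valuation_natCast, zpow_neg,
    zpow_natCast]
  have hp : 0 < p := (Fact.out : p.Prime).pos
  gcongr
  exact_mod_cast Nat.le_of_dvd (Nat.pos_of_ne_zero hk) pow_padicValNat_dvd

variable {R : Type*} [NormedRing R] [NormedAlgebra K R]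

include p in
theorem norm_div_natCast_smul_le_s15 {c : K} (hc : ‖c‖ ≤ 1) (k : ℕ) (x : R) :
    ‖(c / (k : K)) • x‖ ≤ k * ‖x‖ := by
  rw [norm_smul, norm_div]
  rcases eq_or_ne k 0 with rfl | hk
  · simp
  have hinv : ‖(k : K)‖⁻¹ ≤ k := inv_le_of_inv_le₀ (by positivity) (inv_natCast_le_norm_natCast p k)
  gcongr
  calc ‖c‖ / ‖(k : K)‖ ≤ 1 / ‖(k : K)‖ := by gcongr
    _ ≤ k := by rwa [one_div]

variable [IsUltrametricDist R]

include p in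
theorem HasLog.tendsto_inv_smul_pow_sub_one {a s : R} (h : HasLog K a s) (ha : ‖a - 1‖ < 1)
    {ι : Type*} {l : Filter ι} {m : ι → ℕ} (hm₀ : ∀ i, m i ≠ 0)
    (hm : Tendsto (fun i => (m i : K)) l (𝓝 0)) :
    Tendsto (fun i => (m i : K)⁻¹ • (a ^ m i - 1)) l (𝓝 s) := by
  have := charZero_of_normedAlgebra_padic p (K := K)
  have : IsUltrametricDist K := .of_normedAlgebra ℚ_[p]
  obtain ⟨m, rfl⟩ : ∃ m' : ι → ℕ, m = fun i => m' i + 1 :=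
    ⟨fun i => m i - 1, funext fun i => (Nat.sub_add_cancel (Nat.pos_of_ne_zero (hm₀ i))).symm⟩
  have hexpand (i : ι) : ((m i + 1 : ℕ) : K)⁻¹ • (a ^ (m i + 1) - 1) =
      ∑ k ∈ Finset.range (m i + 1),
        (((m i).choose k : K) / ((k + 1 : ℕ) : K)) • (a - 1) ^ (k + 1) := by
    rw [pow_succ_sub_one_eq_natCast_smul_sum (K := K),
      inv_smul_smul₀ (Nat.cast_ne_zero.2 (m i).succ_ne_zero)]
  simp only [hexpand]
  refine tendsto_sum_range_of_dominated_of_ultrametric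
    (bound := fun k => ((k + 1 : ℕ) : ℝ) * ‖a - 1‖ ^ (k + 1))
    (g := fun k => ((-1 : K) ^ k / ((k + 1 : ℕ) : K)) • (a - 1) ^ (k + 1)) ?_ ?_ ?_ ?_ ?_
  · exact (tendsto_add_atTop_iff_nat 1).2
      (tendsto_self_mul_const_pow_of_lt_one (norm_nonneg _) ha)
  · intro i k
    refine (norm_div_natCast_smul_le_s15 p (IsUltrametricDist.norm_natCast_le_one K _) _ _).trans ?_
    gcongr
    exact norm_pow_le' _ k.succ_pos
  · intro i k hk
    rw [Nat.choose_eq_zero_of_lt hk, Nat.cast_zero, zero_div, zero_smul]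
  · exact fun k => ((tendsto_natCast_choose_of_tendsto_succ hm k).div_const _).smul_const _
  · simpa only [HasLog, ← Finset.Ico_add_one_right_eq_Icc, Finset.sum_Ico_eq_sum_range,
      add_tsub_cancel_right, add_tsub_cancel_left, add_comm 1] using h

include p in
theorem exists_pow_sub_one_eq_natCast_smul_mul {a : R} (ha : ‖a - 1‖ < 1 / 2) (m : ℕ) :
    ∃ e : R, ‖e‖ < 1 ∧ a ^ m - 1 = (m : K) • ((a - 1) * (1 - e)) := by
  have := charZero_of_normedAlgebra_padic p (K := K)
  have : IsUltrametricDist K := .of_normedAlgebra ℚ_[p]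
  rcases m with _ | m
  · exact ⟨0, by simp⟩
  refine ⟨-∑ k ∈ Finset.range m,
    ((m.choose (k + 1) : K) / ((k + 1 + 1 : ℕ) : K)) • (a - 1) ^ (k + 1), ?_, ?_⟩
  · have hterm (k : ℕ) : ‖((m.choose (k + 1) : K) / ((k + 1 + 1 : ℕ) : K)) • (a - 1) ^ (k + 1)‖ ≤
        2 * ‖a - 1‖ :=
      calc
        _ ≤ ((k + 1 + 1 : ℕ) : ℝ) * ‖(a - 1) ^ (k + 1)‖ :=
          norm_div_natCast_smul_le_s15 p (IsUltrametricDist.norm_natCast_le_one K _) _ _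
        _ ≤ 2 ^ (k + 1) * ‖a - 1‖ ^ (k + 1) := by
          gcongr
          · exact_mod_cast (k + 1).lt_two_pow_self
          · exact norm_pow_le' _ k.succ_pos
        _ = (2 * ‖a - 1‖) ^ (k + 1) := (mul_pow _ _ _).symm
        _ ≤ 2 * ‖a - 1‖ := pow_le_of_le_one (by positivity) (by linarith) k.succ_ne_zero
    rw [norm_neg]
    exact (IsUltrametricDist.norm_sum_le_of_forall_le_of_nonneg (by positivity)
      fun k _ => hterm k).trans_lt (by linarith)
  · rw [pow_succ_sub_one_eq_natCast_smul_sum (K := K), Finset.sum_range_succ', sub_neg_eq_add,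
      mul_add, mul_one, add_comm (a - 1), Finset.mul_sum]
    simp only [mul_smul_comm, ← pow_succ', Nat.choose_zero_right, zero_add, Nat.cast_one, div_one,
      one_smul, pow_one]

end Logarithm

section MatrixNorm

variable {n S : Type*} [Fintype n] [DecidableEq n]

/-- The elementwise sup norm on square matrices over an ultrametric ring, as a normed ring: the
strong triangle inequality makes it submultiplicative. Kept local because matrices carry several
natural norms. -/
abbrev ultrametricMatrixNormedRing [NormedRing S] [IsUltrametricDist S] :
    NormedRing (Matrix n n S) where
  __ := Matrix.normedAddCommGroup
  __ := (inferInstance : Ring (Matrix n n S))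
  norm_mul_le A B := by
    let : NormedAddCommGroup (Matrix n n S) := Matrix.normedAddCommGroup
    refine (Matrix.norm_le_iff (by positivity)).2 fun i j => ?_
    rw [Matrix.mul_apply]
    refine IsUltrametricDist.norm_sum_le_of_forall_le_of_nonneg (by positivity) fun k _ => ?_
    exact norm_mul_le_of_le A.norm_entry_le_entrywise_sup_norm B.norm_entry_le_entrywise_sup_norm

attribute [local instance] ultrametricMatrixNormedRing

/-- The scalar action on square matrices over an ultrametric field, compatible with the elementwise
sup norm of `ultrametricMatrixNormedRing`. -/
abbrev ultrametricMatrixNormedAlgebra [NormedField S] [IsUltrametricDist S] :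
    NormedAlgebra S (Matrix n n S) where
  __ := (inferInstance : Algebra S (Matrix n n S))
  norm_smul_le := Matrix.normedSpace.norm_smul_le

attribute [local instance] ultrametricMatrixNormedAlgebra

theorem isUltrametricDist_matrix [NormedRing S] [IsUltrametricDist S] :
    IsUltrametricDist (Matrix n n S) :=
  inferInstanceAs (IsUltrametricDist (n → n → S))

attribute [local instance] isUltrametricDist_matrix

theorem norm_det_le_one [NormedCommRing S] [NormOneClass S] [IsUltrametricDist S]
    {A : Matrix n n S} (hA : ‖A‖ ≤ 1) : ‖A.det‖ ≤ 1 := by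
  rw [Matrix.det_apply']
  refine IsUltrametricDist.norm_sum_le_of_forall_le_of_nonneg zero_le_one fun σ _ => ?_
  refine (norm_mul_le_of_le (IsUltrametricDist.norm_intCast_le_one S _) ?_).trans_eq (one_mul 1)
  exact (Finset.norm_prod_le _ _).trans <| Finset.prod_le_one (fun _ _ => norm_nonneg _)
    fun i _ => A.norm_entry_le_entrywise_sup_norm.trans hA

theorem norm_det_one_sub_eq_one [NormedCommRing S] [NormOneClass S] [NormMulClass S]
    [IsUltrametricDist S] {E : Matrix n n S} (hE : ‖E‖ < 1) : ‖(1 - E).det‖ = 1 := by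
  have hone : ‖(1 : Matrix n n S)‖ ≤ 1 :=
    (Matrix.norm_le_iff zero_le_one).2 fun i j => by
      rw [Matrix.one_apply]; split_ifs <;> simp
  have hpow (k : ℕ) : ‖E ^ k‖ ≤ 1 := by
    rcases k.eq_zero_or_pos with rfl | hk
    · rwa [pow_zero]
    · exact (norm_pow_le' E hk).trans (pow_le_one₀ (norm_nonneg _) hE.le)
  refine le_antisymm (norm_det_le_one ?_) ?_
  · rw [sub_eq_add_neg]
    exact (IsUltrametricDist.norm_add_le_max _ _).trans (max_le hone ((norm_neg E).trans_le hE.le))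
  have hle (k : ℕ) : ‖(1 - E ^ k).det‖ ≤ ‖(1 - E).det‖ := by
    rw [← mul_neg_geom_sum E k, Matrix.det_mul, norm_mul]
    exact mul_le_of_le_one_right (norm_nonneg _) <| norm_det_le_one <|
      IsUltrametricDist.norm_sum_le_of_forall_le_of_nonneg zero_le_one fun i _ => hpow i
  have hlim : Tendsto (fun k => ‖(1 - E ^ k).det‖) atTop (𝓝 1) := by
    have hcont : Continuous fun M : Matrix n n S => ‖(1 - M).det‖ :=
      (continuous_const.sub continuous_id).matrix_det.norm
    simpa only [sub_zero, Matrix.det_one, norm_one, Function.comp_def] using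
      (hcont.tendsto 0).comp (tendsto_pow_atTop_nhds_zero_of_norm_lt_one hE)
  exact le_of_tendsto' hlim hle

section DetLog

variable (p : ℕ) [Fact p.Prime] {K n : Type*} [NormedField K] [NormedAlgebra ℚ_[p] K]
  [IsUltrametricDist K] [Fintype n] [DecidableEq n]

include p in
theorem norm_det_pow_sub_one {A : Matrix n n K} (hA : ‖A - 1‖ < 1 / 2) (m : ℕ) :
    ‖(A ^ m - 1).det‖ = ‖(m : K)‖ ^ Fintype.card n * ‖(A - 1).det‖ := by
  obtain ⟨E, hE, hpow⟩ := exists_pow_sub_one_eq_natCast_smul_mul p (K := K) hA m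
  rw [hpow, Matrix.det_smul, Matrix.det_mul, norm_mul, norm_mul, norm_pow,
    norm_det_one_sub_eq_one hE, mul_one]

include p in
theorem HasLog.norm_det {A L : Matrix n n K} (hL : HasLog K A L) (hA : ‖A - 1‖ < 1) {q : ℕ}
    (hq : q ≠ 0) (hAq : ‖A ^ q - 1‖ < 1 / 2) :
    ‖(q : K)‖ ^ Fintype.card n * ‖L.det‖ = ‖(A ^ q - 1).det‖ := by
  have := charZero_of_normedAlgebra_padic p (K := K)
  have hp : p ≠ 0 := (Fact.out : p.Prime).ne_zero
  have hpK : Tendsto (fun k => ((q * p ^ k : ℕ) : K)) atTop (𝓝 0) := by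
    have hnorm : ‖(p : K)‖ < 1 := by
      rw [norm_natCast_prime]
      exact inv_lt_one_of_one_lt₀ (by exact_mod_cast (Fact.out : p.Prime).one_lt)
    simpa using (tendsto_pow_atTop_nhds_zero_of_norm_lt_one hnorm).const_mul (q : K)
  have hlim := hL.tendsto_inv_smul_pow_sub_one p hA (fun k => mul_ne_zero hq (pow_ne_zero k hp)) hpK
  have hconst (k : ℕ) : ‖(q : K)‖ ^ Fintype.card n *
      ‖(((q * p ^ k : ℕ) : K)⁻¹ • (A ^ (q * p ^ k) - 1)).det‖ = ‖(A ^ q - 1).det‖ := by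
    have hpk : ((p ^ k : ℕ) : K) ≠ 0 := Nat.cast_ne_zero.2 (pow_ne_zero k hp)
    rw [Matrix.det_smul, norm_mul, norm_pow, pow_mul A, norm_det_pow_sub_one p hAq, ← mul_assoc,
      ← mul_assoc, ← mul_pow, ← mul_pow, ← norm_mul, ← norm_mul, Nat.cast_mul, mul_right_comm,
      mul_inv_cancel₀ (mul_ne_zero (Nat.cast_ne_zero.2 hq) hpk), norm_one, one_pow, one_mul]
  have hcont : Continuous fun M : Matrix n n K => ‖M.det‖ := continuous_id.matrix_det.norm
  exact tendsto_nhds_unique ((((hcont.tendsto L).comp hlim).const_mul _).congr hconst)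
    tendsto_const_nhds

end DetLog

theorem padic_matrix_det_log_ne_zero_general (p : ℕ) [Fact p.Prime] {K n : Type*} [NormedField K]
    [NormedAlgebra ℚ_[p] K] [Fintype n] [DecidableEq n] {A L : Matrix n n K}
    (hA : ∀ i j, ‖(A - 1) i j‖ ≤ (p : ℝ)⁻¹) (hL : HasLog K A L) :
    ‖L.det‖ =
      if p = 2 then 2 ^ Fintype.card n * ‖(A ^ 2 - 1).det‖ else ‖(A - 1).det‖ := by
  have : IsUltrametricDist K := .of_normedAlgebra ℚ_[p]
  have hnorm : ‖A - 1‖ ≤ (p : ℝ)⁻¹ := (Matrix.norm_le_iff (by positivity)).2 hA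
  have hlt : ‖A - 1‖ < 1 :=
    hnorm.trans_lt (inv_lt_one_of_one_lt₀ (by exact_mod_cast (Fact.out : p.Prime).one_lt))
  split_ifs with hp
  · subst hp
    have htwo : ‖(2 : K)‖ = 2⁻¹ := by
      simpa using norm_natCast_prime 2 (K := K)
    have hsq : ‖A ^ 2 - 1‖ < 1 / 2 := (norm_sq_sub_one_le_max K A).trans_lt <| by
      rw [htwo]
      push_cast at hnorm
      exact max_lt (by nlinarith [norm_nonneg (A - 1)]) (by linarith)
    rw [← hL.norm_det 2 hlt two_ne_zero hsq, Nat.cast_ofNat, htwo, ← mul_assoc, ← mul_pow,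
      mul_inv_cancel₀ two_ne_zero, one_pow, one_mul]
  · have hhalf : (p : ℝ)⁻¹ < 1 / 2 := by
      rw [one_div]
      gcongr
      exact_mod_cast lt_of_le_of_ne (Fact.out : p.Prime).two_le (Ne.symm hp)
    simpa using hL.norm_det p hlt one_ne_zero (by simpa using hnorm.trans_lt hhalf)

end MatrixNorm

end

/-- Let `A ∈ M_N(ℤ_p)` with `A ≡ 1 (mod p)`, and `L = log A` (the limit of the
logarithm series).  If `det(A - 1) ≠ 0` (for `p` odd), resp. `det(A² - 1) ≠ 0`
(for `p = 2`), then `det(log A) ≠ 0`. -/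
theorem padic_matrix_det_log_ne_zero (p : ℕ) [Fact p.Prime] (N : ℕ) (hN : 1 ≤ N)
    (A : Matrix (Fin N) (Fin N) ℚ_[p])
    (hA : ∀ i j, ‖A i j‖ ≤ 1)
    (hA1 : ∀ i j, ‖(A - 1) i j‖ ≤ (p : ℝ)⁻¹)
    (L : Matrix (Fin N) (Fin N) ℚ_[p])
    (hL : Tendsto (fun m : ℕ => ∑ j ∈ Finset.Icc 1 m,
        ((-1 : ℚ_[p]) ^ (j - 1) / (j : ℚ_[p])) • (A - 1) ^ j) atTop (nhds L))
    (hdet : if p = 2 then (A ^ 2 - 1).det ≠ 0 else (A - 1).det ≠ 0) :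
    L.det ≠ 0 := by
  rw [← norm_ne_zero_iff, padic_matrix_det_log_ne_zero_general p hA1 hL]
  split_ifs at hdet ⊢ <;> simpa using hdet
end

section
/- Let p be a prime and I a countable set. Equip the ℤ_p-module ∏_{i∈I} ℤ_p of all functions I → ℤ_p with the product topology (topology of pointwise convergence), and for i ∈ I let δ_i denote the function with value 1 at i and 0 elsewhere. Let M be a compact Hausdorff topological ℤ_p-module admitting a neighborhood base of 0 consisting of open ℤ_p-submodules, and let f : I → M be 0-convergent, i.e. for every open submodule U ≤ M all but finitely many i ∈ I satisfy f(i) ∈ U. Then there exists a unique continuous ℤ_p-linear map f̃ : ∏_{i∈I} ℤ_p → M such that f̃(δ_i) = f(i) for all i ∈ I. -/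
/-!
For `x : I → R`, the family `x i • f i` tends to `0` along with `f`, because open submodules are
stable under scalars; in a complete nonarchimedean group it is therefore summable, and
`F x = ∑' i, x i • f i` is linear. Given an open submodule `W`, all terms with `f i ∈ W` lie in `W`
whatever `x` is, so `F x ∈ W` only requires finitely many coordinates of `x` to be small: this is
continuity for the product topology. Conversely `x = ∑' i, x i • δ_i` in the product topology, so
a continuous linear map is determined by its values on the `δ_i`.
-/

open Filter Topology

section ProductTopology

variable {I : Type*} [DecidableEq I]

theorem hasSum_piSingle {A : I → Type*} [∀ i, AddCommMonoid (A i)] [∀ i, TopologicalSpace (A i)]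
    (x : ∀ i, A i) : HasSum (fun i ↦ Pi.single i (x i)) x := by
  refine Pi.hasSum.2 fun j ↦ ?_
  simpa only [Pi.single_eq_same] using
    hasSum_single (f := fun i ↦ (Pi.single i (x i) : ∀ i, A i) j) j
      fun i hij ↦ Pi.single_eq_of_ne hij.symm (x i)

variable {R M : Type*} [Semiring R] [TopologicalSpace R] [AddCommMonoid M] [Module R M]
  [TopologicalSpace M] {F G : (I → R) →ₗ[R] M}

theorem hasSum_smul_map_piSingle_one (hF : Continuous F) (x : I → R) :
    HasSum (fun i ↦ x i • F (Pi.single i 1)) (F x) := by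
  simpa only [Function.comp_def, ← map_smul, ← Pi.single_smul, smul_eq_mul, mul_one] using
    (hasSum_piSingle x).map F hF

theorem linearMap_eq_of_continuous_of_piSingle_one [T2Space M] (hF : Continuous F)
    (hG : Continuous G) (h : ∀ i, F (Pi.single i 1) = G (Pi.single i 1)) : F = G :=
  LinearMap.ext fun x ↦ (hasSum_smul_map_piSingle_one hF x).unique <| by
    simpa only [h] using hasSum_smul_map_piSingle_one hG x

end ProductTopology

section TsumSMul

variable {I R M : Type*} [Semiring R] [AddCommMonoid M] [Module R M] [TopologicalSpace M]
  [T2Space M] [ContinuousAdd M] [ContinuousConstSMul R M]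

/-- The linear map `x ↦ ∑' i, x i • f i` on the full product `I → R`: the analogue of
`Fintype.linearCombination` for an infinite family all of whose linear combinations converge. -/
@[simps]
noncomputable def tsumSMulLinearMap (f : I → M) (hf : ∀ x : I → R, Summable fun i ↦ x i • f i) :
    (I → R) →ₗ[R] M where
  toFun x := ∑' i, x i • f i
  map_add' x y := by
    simpa only [Pi.add_apply, add_smul] using (hf x).tsum_add (hf y)
  map_smul' c x := by
    simpa only [Pi.smul_apply, smul_eq_mul, mul_smul, RingHom.id_apply] using
      (hf x).tsum_const_smul c

theorem tsumSMulLinearMap_piSingle_one [DecidableEq I] (f : I → M)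
    (hf : ∀ x : I → R, Summable fun i ↦ x i • f i) (i : I) :
    tsumSMulLinearMap f hf (Pi.single i 1) = f i := by
  rw [tsumSMulLinearMap_apply, tsum_eq_single i fun j hj ↦ by rw [Pi.single_eq_of_ne hj, zero_smul],
    Pi.single_eq_same, one_smul]

end TsumSMul

section LinearTopology

variable {I R M : Type*} [Ring R] [AddCommGroup M] [Module R M]

theorem isLinearTopology_of_forall_exists_isOpen [TopologicalSpace M]
    (h : ∀ U ∈ 𝓝 (0 : M), ∃ W : Submodule R M, IsOpen (W : Set M) ∧ (W : Set M) ⊆ U) :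
    IsLinearTopology R M :=
  .mk_of_hasBasis R (p := fun W : Submodule R M ↦ IsOpen (W : Set M)) <|
    hasBasis_iff.2 fun U ↦ ⟨h U, fun ⟨W, hW, hWU⟩ ↦ mem_of_superset (hW.mem_nhds W.zero_mem) hWU⟩

theorem tendsto_cofinite_zero_iff_forall_isOpen_submodule [TopologicalSpace M] [ContinuousAdd M]
    [IsLinearTopology R M] {f : I → M} :
    Tendsto f cofinite (𝓝 0) ↔
      ∀ W : Submodule R M, IsOpen (W : Set M) → {i | f i ∉ W}.Finite :=
  (IsLinearTopology.hasBasis_open_submodule R).tendsto_right_iff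

variable (R) in
theorem nonarchimedeanAddGroup_of_isLinearTopology [TopologicalSpace M] [IsTopologicalAddGroup M]
    [IsLinearTopology R M] : NonarchimedeanAddGroup M where
  is_nonarchimedean _ hU :=
    have ⟨W, hW, hWU⟩ := (IsLinearTopology.hasBasis_open_submodule R).mem_iff.1 hU
    ⟨⟨W.toAddSubgroup, hW⟩, hWU⟩

theorem summable_smul_of_tendsto_cofinite_zero [UniformSpace M] [IsUniformAddGroup M]
    [CompleteSpace M] [IsLinearTopology R M] {f : I → M} (hf : Tendsto f cofinite (𝓝 0))
    (x : I → R) : Summable fun i ↦ x i • f i :=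
  have := nonarchimedeanAddGroup_of_isLinearTopology R (M := M)
  NonarchimedeanAddGroup.summable_of_tendsto_cofinite_zero
    (IsLinearTopology.tendsto_smul_zero R x f hf)

variable [TopologicalSpace R] [TopologicalSpace M] [ContinuousSMul R M]

theorem eventually_forall_smul_mem {f : I → M} {W : Submodule R M} (hW : IsOpen (W : Set M))
    (hf : {i | f i ∉ W}.Finite) : ∀ᶠ x : I → R in 𝓝 0, ∀ i, x i • f i ∈ W := by
  have small_coordinates : ∀ᶠ x : I → R in 𝓝 0, ∀ i ∈ {i | f i ∉ W}, x i • f i ∈ W := by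
    refine (eventually_all_finite hf).2 fun i _ ↦ ?_
    have hcont : Continuous fun x : I → R ↦ x i • f i := by fun_prop
    exact hcont.continuousAt.eventually_mem (hW.mem_nhds (by simp))
  filter_upwards [small_coordinates] with x hx i
  by_cases hi : f i ∈ W
  · exact W.smul_mem _ hi
  · exact hx i hi

theorem continuous_tsumSMulLinearMap [IsTopologicalAddGroup R] [T2Space M] [IsTopologicalAddGroup M]
    [IsLinearTopology R M] {f : I → M} (hf : Tendsto f cofinite (𝓝 0))
    (hsum : ∀ x : I → R, Summable fun i ↦ x i • f i) : Continuous (tsumSMulLinearMap f hsum) := by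
  refine continuous_of_tendsto_nhds_zero _ <|
    (IsLinearTopology.hasBasis_open_submodule R).tendsto_right_iff.2 fun W hW ↦ ?_
  have hclosed : IsClosed (W : Set M) := W.toAddSubgroup.isClosed_of_isOpen hW
  filter_upwards [eventually_forall_smul_mem hW
    (tendsto_cofinite_zero_iff_forall_isOpen_submodule.1 hf W hW)] with x hx
  exact tsum_mem hclosed hx

end LinearTopology

theorem free_profinite_zp_module_universal_property_general
    {R I M : Type*} [Ring R] [TopologicalSpace R] [IsTopologicalAddGroup R] [DecidableEq I]
    [AddCommGroup M] [Module R M] [UniformSpace M] [IsUniformAddGroup M] [ContinuousSMul R M]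
    [IsLinearTopology R M] [CompleteSpace M] [T2Space M]
    {f : I → M} (hf : Tendsto f cofinite (𝓝 0)) :
    ∃! F : (I → R) →ₗ[R] M, Continuous F ∧ ∀ i, F (Pi.single i 1) = f i := by
  have hsum := summable_smul_of_tendsto_cofinite_zero (R := R) hf
  have hcont := continuous_tsumSMulLinearMap hf hsum
  have hsingle := tsumSMulLinearMap_piSingle_one f hsum
  exact ⟨tsumSMulLinearMap f hsum, ⟨hcont, hsingle⟩, fun G ⟨hG, hGf⟩ ↦
    linearMap_eq_of_continuous_of_piSingle_one hG hcont fun i ↦ (hGf i).trans (hsingle i).symm⟩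

/-- Universal property of the free profinite `ℤ_p`-module on a countable set `I`:
every `0`-convergent map `f : I → M` to a profinite `ℤ_p`-module extends uniquely to a
continuous `ℤ_p`-linear map `∏_{i ∈ I} ℤ_p → M` sending `δ_i` to `f i`. -/
theorem free_profinite_zp_module_universal_property
    (p : ℕ) [Fact p.Prime] (I : Type*) [Countable I] [DecidableEq I]
    (M : Type*) [AddCommGroup M] [Module ℤ_[p] M] [TopologicalSpace M]
    [IsTopologicalAddGroup M] [ContinuousSMul ℤ_[p] M] [CompactSpace M] [T2Space M]
    (hbase : ∀ U ∈ nhds (0 : M),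
      ∃ W : Submodule ℤ_[p] M, IsOpen (W : Set M) ∧ (W : Set M) ⊆ U)
    (f : I → M)
    (hf : ∀ W : Submodule ℤ_[p] M, IsOpen (W : Set M) → {i : I | f i ∉ W}.Finite) :
    ∃! F : (I → ℤ_[p]) →ₗ[ℤ_[p]] M,
      Continuous F ∧ ∀ i : I, F (Pi.single i 1) = f i := by
  let := IsTopologicalAddGroup.rightUniformSpace M
  have := isUniformAddGroup_of_addCommGroup (G := M)
  have := isLinearTopology_of_forall_exists_isOpen hbase
  exact free_profinite_zp_module_universal_property_general
    (tendsto_cofinite_zero_iff_forall_isOpen_submodule.2 hf)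
end
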